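/- arXiv:1208.4936 — 4 statements merged into one kernel-verified Lean document; each statement's English description precedes it below -/
import Mathlib

section
/- Let α, β : (2,∞) → (0,∞) satisfy α_p ≤ 1/p and β_p ≤ 1/p² for all p > 2, and suppose there is a constant A > 0 such that v_p^{(2)}(f) ≤ A[ω(f;1,1)_p + α_p·K_p(f) + β_p·I_p(f)] holds for every p > 2 and every continuous function f ∈ L^p([0,1]²) with I_p(f) < ∞. Then liminf_{p→∞} p·α_p > 0 and liminf_{p→∞} p²·β_p > 0. -/
open MeasureTheory Filter Set
open scoped ENNReal

noncomputable section

/-- A function of two real variables that is 1-periodic in each variable. -/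
def BiPeriodic (f : ℝ → ℝ → ℝ) : Prop :=
  (∀ x y, f (x + 1) y = f x y) ∧ (∀ x y, f x (y + 1) = f x y)

/-- A 1-periodic function of one real variable. -/
def Periodic1 (g : ℝ → ℝ) : Prop := ∀ x, g (x + 1) = g x

/-- The `L^p` norm of a function over `[0,1]^2` (as a value in `[0,∞]`). -/
noncomputable def lpNorm2 (p : ℝ) (f : ℝ → ℝ → ℝ) : ℝ≥0∞ :=
  (∫⁻ x in Set.Icc (0:ℝ) 1, ∫⁻ y in Set.Icc (0:ℝ) 1,
      ENNReal.ofReal (|f x y| ^ p)) ^ (1 / p)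

/-- The `L^p` norm of a function over `[0,1]` (as a value in `[0,∞]`). -/
noncomputable def lpNorm1 (p : ℝ) (g : ℝ → ℝ) : ℝ≥0∞ :=
  (∫⁻ x in Set.Icc (0:ℝ) 1, ENNReal.ofReal (|g x| ^ p)) ^ (1 / p)

/-- Membership in `L^p([0,1]^2)`: measurable, 1-periodic in each variable,
finite `L^p` norm. -/
def MemLp2 (p : ℝ) (f : ℝ → ℝ → ℝ) : Prop :=
  Measurable (Function.uncurry f) ∧ BiPeriodic f ∧ lpNorm2 p f < ⊤

/-- Membership in `L^p([0,1])` for 1-periodic functions of one variable. -/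
def MemLp1 (p : ℝ) (g : ℝ → ℝ) : Prop :=
  Measurable g ∧ Periodic1 g ∧ lpNorm1 p g < ⊤

/-- The (total) `L^p` modulus of continuity `ω(f;δ)_p` of a bivariate function. -/
noncomputable def modulus2 (p : ℝ) (f : ℝ → ℝ → ℝ) (δ : ℝ) : ℝ≥0∞ :=
  ⨆ (h : ℝ × ℝ) (_ : Real.sqrt (h.1 ^ 2 + h.2 ^ 2) ≤ δ),
    lpNorm2 p (fun x y => f (x + h.1) (y + h.2) - f x y)

/-- The `L^p` modulus of continuity `ω(g;δ)_p` of a univariate function. -/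
noncomputable def modulus1 (p : ℝ) (g : ℝ → ℝ) (δ : ℝ) : ℝ≥0∞ :=
  ⨆ (h : ℝ) (_ : h ∈ Set.Icc 0 δ), lpNorm1 p (fun x => g (x + h) - g x)

/-- The mixed `L^p` modulus of continuity `ω(f;u,v)_p`. -/
noncomputable def mixedModulus (p : ℝ) (f : ℝ → ℝ → ℝ) (u v : ℝ) : ℝ≥0∞ :=
  ⨆ (s : ℝ) (_ : s ∈ Set.Icc 0 u) (t : ℝ) (_ : t ∈ Set.Icc 0 v),
    lpNorm2 p (fun x y => f (x + s) (y + t) - f (x + s) y - f x (y + t) + f x y)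

/-- `J_p(f) = ∫₀¹ t^{-1/p} ω(f;t)_p dt/t`. -/
noncomputable def Jp (p : ℝ) (f : ℝ → ℝ → ℝ) : ℝ≥0∞ :=
  ∫⁻ t in Set.Ioc (0:ℝ) 1, ENNReal.ofReal (t ^ (-(1/p)) / t) * modulus2 p f t

/-- `K_p(f) = ∫₀¹ t^{-1/p} [ω(f;t,1)_p + ω(f;1,t)_p] dt/t`. -/
noncomputable def Kp (p : ℝ) (f : ℝ → ℝ → ℝ) : ℝ≥0∞ :=
  ∫⁻ t in Set.Ioc (0:ℝ) 1,
    ENNReal.ofReal (t ^ (-(1/p)) / t) * (mixedModulus p f t 1 + mixedModulus p f 1 t)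

/-- `I_p(f) = ∫₀¹∫₀¹ (uv)^{-1/p} ω(f;u,v)_p (du/u)(dv/v)`. -/
noncomputable def Ip (p : ℝ) (f : ℝ → ℝ → ℝ) : ℝ≥0∞ :=
  ∫⁻ u in Set.Ioc (0:ℝ) 1, ∫⁻ v in Set.Ioc (0:ℝ) 1,
    ENNReal.ofReal ((u * v) ^ (-(1/p)) / (u * v)) * mixedModulus p f u v

/-- The essential supremum norm of `f` over `[0,1]^2`. -/
noncomputable def supNorm2 (f : ℝ → ℝ → ℝ) : ℝ≥0∞ :=
  essSup (fun z : ℝ × ℝ => ENNReal.ofReal |f z.1 z.2|)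
    (volume.restrict ((Set.Icc (0:ℝ) 1) ×ˢ (Set.Icc (0:ℝ) 1)))

/-- The Wiener `p`-variation of a 1-periodic function `g`, as a value in `[0,∞]`:
the supremum over partitions `x₀ < x₁ < ... < xₙ = x₀ + 1` of
`(∑ |g(x_{k+1}) - g(x_k)|^p)^{1/p}`. -/
noncomputable def vp (p : ℝ) (g : ℝ → ℝ) : ℝ≥0∞ :=
  ⨆ (n : ℕ) (x : ℕ → ℝ) (_ : ∀ i < n, x i < x (i + 1)) (_ : x n = x 0 + 1),
    ENNReal.ofReal ((∑ k ∈ Finset.range n, |g (x (k + 1)) - g (x k)| ^ p) ^ (1 / p))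

/-- The Hardy–Vitali type total `p`-variation of a bivariate function,
as a value in `[0,∞]`: the supremum over nets of
`(∑∑ |Δf(x_i,y_j)|^p)^{1/p}`. -/
noncomputable def vp2 (p : ℝ) (f : ℝ → ℝ → ℝ) : ℝ≥0∞ :=
  ⨆ (m : ℕ) (n : ℕ) (x : ℕ → ℝ) (y : ℕ → ℝ)
    (_ : ∀ i < m, x i < x (i + 1)) (_ : x m = x 0 + 1)
    (_ : ∀ j < n, y j < y (j + 1)) (_ : y n = y 0 + 1),
    ENNReal.ofReal ((∑ i ∈ Finset.range m, ∑ j ∈ Finset.range n,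
      |f (x (i + 1)) (y (j + 1)) - f (x (i + 1)) (y j)
        - f (x i) (y (j + 1)) + f (x i) (y j)| ^ p) ^ (1 / p))

/-- Membership in the Hardy class `H_p^{(2)}`: finite Vitali `p`-variation and
all linear sections of bounded `p`-variation. -/
def MemHp2 (p : ℝ) (f : ℝ → ℝ → ℝ) : Prop :=
  vp2 p f < ⊤ ∧ (∀ x, vp p (fun y => f x y) < ⊤) ∧ (∀ y, vp p (fun x => f x y) < ⊤)

/-- Membership in the mixed norm class `V_p[V_p]`: all sections have bounded
`p`-variation and the functions `x ↦ v_p(f_x)`, `y ↦ v_p(f_y)` are themselves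
of bounded `p`-variation. -/
def MemVpVp (p : ℝ) (f : ℝ → ℝ → ℝ) : Prop :=
  (∀ x, vp p (fun y => f x y) < ⊤) ∧ (∀ y, vp p (fun x => f x y) < ⊤) ∧
  vp p (fun x => (vp p (fun y => f x y)).toReal) < ⊤ ∧
  vp p (fun y => (vp p (fun x => f x y)).toReal) < ⊤

/-- `W_p(f) = v_p(φ_p[f]) + v_p(ψ_p[f])`, where `φ_p[f](x) = v_p(f_x)` and
`ψ_p[f](y) = v_p(f_y)`. -/
noncomputable def Wp (p : ℝ) (f : ℝ → ℝ → ℝ) : ℝ≥0∞ :=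
  vp p (fun x => (vp p (fun y => f x y)).toReal)
    + vp p (fun y => (vp p (fun x => f x y)).toReal)

/-- Membership in `L^p_0([0,1]^2)`: membership in `L^p([0,1]^2)` together with
vanishing of the linear mean values `∫₀¹ f(x,t) dt` and `∫₀¹ f(t,y) dt` for a.e.
`x` resp. `y`. -/
def MemLp20 (p : ℝ) (f : ℝ → ℝ → ℝ) : Prop :=
  MemLp2 p f ∧ (∀ᵐ x : ℝ ∂volume, ∫ t in (0:ℝ)..1, f x t = 0) ∧
    (∀ᵐ y : ℝ ∂volume, ∫ t in (0:ℝ)..1, f t y = 0)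

/-- `T` is a trigonometric polynomial of degree `(n,m)` in two variables. -/
def IsTrigPoly2 (n m : ℕ) (T : ℝ → ℝ → ℝ) : Prop :=
  ∃ a b c d : ℕ → ℕ → ℝ, ∀ x y : ℝ,
    T x y = ∑ j ∈ Finset.range (n + 1), ∑ k ∈ Finset.range (m + 1),
      (a j k * Real.cos (2 * Real.pi * j * x) * Real.cos (2 * Real.pi * k * y)
        + b j k * Real.cos (2 * Real.pi * j * x) * Real.sin (2 * Real.pi * k * y)
        + c j k * Real.sin (2 * Real.pi * j * x) * Real.cos (2 * Real.pi * k * y)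
        + d j k * Real.sin (2 * Real.pi * j * x) * Real.sin (2 * Real.pi * k * y))

end

/-- Periodic tent function. -/
noncomputable def tent (δ x : ℝ) : ℝ := max 0 (1 - ‖(x : UnitAddCircle)‖ / δ)

lemma tent_cont (δ : ℝ) : Continuous (tent δ) := by
  unfold tent
  have : Continuous (fun x : ℝ => (x : UnitAddCircle)) := AddCircle.continuous_mk' 1
  fun_prop

lemma tent_per (δ x : ℝ) : tent δ (x + 1) = tent δ x := by
  unfold tent
  have : ((x + 1 : ℝ) : UnitAddCircle) = (x : UnitAddCircle) := AddCircle.coe_add_period 1 x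
  rw [this]

lemma tent_nonneg (δ x : ℝ) : 0 ≤ tent δ x := le_max_left _ _

lemma tent_le_one {δ : ℝ} (hδ : 0 < δ) (x : ℝ) : tent δ x ≤ 1 := by
  unfold tent
  have : 0 ≤ ‖(x : UnitAddCircle)‖ / δ := by positivity
  apply max_le <;> linarith

lemma tent_zero (δ : ℝ) : tent δ 0 = 1 := by
  unfold tent; simp

lemma tent_half {δ : ℝ} (hδ : 0 < δ) (hδ2 : δ ≤ 1 / 2) : tent δ (1 / 2) = 0 := by
  unfold tent
  have h : ‖((1 / 2 : ℝ) : UnitAddCircle)‖ = |(1 / 2 : ℝ)| :=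
    (AddCircle.norm_coe_eq_abs_iff 1 one_ne_zero).2 (by rw [abs_of_pos, abs_of_pos] <;> norm_num)
  rw [h, abs_of_pos (by norm_num)]
  apply max_eq_left
  have : 1 ≤ 1 / 2 / δ := by rw [le_div_iff₀ hδ]; linarith
  linarith

lemma tent_diff {δ : ℝ} (hδ : 0 < δ) (x s : ℝ) (hs : 0 ≤ s) :
    |tent δ (x + s) - tent δ x| ≤ s / δ := by
  unfold tent
  refine (abs_max_sub_max_le_max _ _ _ _).trans ?_
  have h1 : ((x + s : ℝ) : UnitAddCircle) = (x : UnitAddCircle) + (s : UnitAddCircle) := by simp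
  have h2 : ‖(s : UnitAddCircle)‖ ≤ s := by
    have := QuotientAddGroup.norm_mk_le_norm (S := AddSubgroup.zmultiples (1 : ℝ)) (m := s)
    rw [Real.norm_of_nonneg hs] at this
    exact this
  have h3 : |‖((x + s : ℝ) : UnitAddCircle)‖ - ‖(x : UnitAddCircle)‖| ≤ s := by
    refine (abs_norm_sub_norm_le _ _).trans ?_
    rw [h1]; simpa using h2
  have h4 : (1 - ‖((x + s : ℝ) : UnitAddCircle)‖ / δ - (1 - ‖(x : UnitAddCircle)‖ / δ))
      = - ((‖((x + s : ℝ) : UnitAddCircle)‖ - ‖(x : UnitAddCircle)‖) / δ) := by ring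
  rw [h4, abs_neg, abs_div, abs_of_pos hδ]
  simp only [sub_self, abs_zero]
  apply max_le
  · positivity
  · gcongr

lemma tent_integral {δ : ℝ} (hδ : 0 < δ) (hδ2 : δ ≤ 1 / 2) (s : ℝ) :
    ∫ x in (0 : ℝ)..1, tent δ (x + s) ≤ 2 * δ := by
  have hp : Function.Periodic (tent δ) 1 := tent_per δ
  rw [intervalIntegral.integral_comp_add_right (fun x => tent δ x) s]
  have h1 : ∫ x in (0 + s)..(1 + s), tent δ x = ∫ x in (-(1/2) : ℝ)..(-(1/2) + 1), tent δ x := by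
    have := hp.intervalIntegral_add_eq s (-(1/2))
    rw [zero_add, add_comm 1 s]; exact this
  rw [h1, intervalIntegral.integral_of_le (by norm_num)]
  have h2 : ∫ x in Ioc (-(1/2) : ℝ) (-(1/2) + 1), tent δ x
      ≤ ∫ x in Ioc (-(1/2) : ℝ) (-(1/2) + 1), (Icc (-δ) δ).indicator (fun _ => (1 : ℝ)) x := by
    apply setIntegral_mono_on
    · exact ((tent_cont δ).integrableOn_Icc).mono_set Ioc_subset_Icc_self
    · exact (integrable_const (1 : ℝ)).indicator measurableSet_Icc
    · exact measurableSet_Ioc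
    · intro x hx
      by_cases hm : x ∈ Icc (-δ) δ
      · rw [indicator_of_mem hm]; exact tent_le_one hδ x
      · rw [indicator_of_notMem hm]
        have hx2 : |x| ≤ 1 / 2 := abs_le.2 ⟨by linarith [hx.1], by linarith [hx.2]⟩
        have h : ‖(x : UnitAddCircle)‖ = |x| :=
          (AddCircle.norm_coe_eq_abs_iff 1 one_ne_zero).2 (by simpa using hx2)
        have h5 : δ < |x| := by
          by_contra hc
          exact hm (abs_le.1 (not_lt.1 hc))
        unfold tent
        rw [h]
        apply max_le le_rfl
        have : 1 ≤ |x| / δ := by rw [le_div_iff₀ hδ]; linarith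
        linarith
  refine h2.trans ?_
  rw [setIntegral_indicator measurableSet_Icc, setIntegral_const, smul_eq_mul, mul_one]
  calc volume.real (Ioc (-(1/2) : ℝ) (-(1/2) + 1) ∩ Icc (-δ) δ)
      ≤ volume.real (Icc (-δ) δ) := measureReal_mono inter_subset_right (by simp)
    _ = 2 * δ := by rw [Real.volume_real_Icc_of_le (by linarith)]; ring

lemma tent_mod {δ p θ s t : ℝ} (hδ : 0 < δ) (hδ2 : δ ≤ 1 / 2) (hp : 1 ≤ p) (hθ : 0 ≤ θ)
    (hθ2 : p * θ ≤ p - 1) (hs : s ∈ Icc 0 t) :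
    lpNorm1 p (fun x => tent δ (x + s) - tent δ x)
      ≤ ENNReal.ofReal (4 * δ ^ (1 / p) * (t / δ) ^ θ) := by
  have hp0 : 0 < p := by linarith
  have ht : 0 ≤ t := hs.1.trans hs.2
  have htd : 0 ≤ t / δ := by positivity
  have key : ∀ x, |tent δ (x + s) - tent δ x| ^ p
      ≤ (t / δ) ^ (p * θ) * (tent δ (x + s) + tent δ x) := by
    intro x
    set d := |tent δ (x + s) - tent δ x| with hd
    have d0 : 0 ≤ d := abs_nonneg _
    have a0 := tent_nonneg δ (x + s)
    have b0 := tent_nonneg δ x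
    have a1 := tent_le_one hδ (x + s)
    have b1 := tent_le_one hδ x
    have d1 : d ≤ 1 := abs_le.2 ⟨by linarith, by linarith⟩
    have d2 : d ≤ tent δ (x + s) + tent δ x := abs_le.2 ⟨by linarith, by linarith⟩
    have d3 : d ≤ t / δ := (tent_diff hδ x s hs.1).trans (by gcongr; exact hs.2)
    rcases d0.eq_or_lt with h | h
    · rw [← h, Real.zero_rpow hp0.ne']; positivity
    · calc d ^ p = d ^ (p - 1) * d := by
            rw [← Real.rpow_add_one h.ne']; ring_nf
        _ ≤ d ^ (p * θ) * d := by
            exact mul_le_mul_of_nonneg_right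
              (Real.rpow_le_rpow_of_exponent_ge h d1 hθ2) d0
        _ ≤ _ := by gcongr
  have hI : ∫⁻ x in Icc (0:ℝ) 1, ENNReal.ofReal (|tent δ (x + s) - tent δ x| ^ p)
      ≤ ENNReal.ofReal ((t / δ) ^ (p * θ) * (4 * δ)) := by
    calc _ ≤ ∫⁻ x in Icc (0:ℝ) 1,
          ENNReal.ofReal ((t / δ) ^ (p * θ) * (tent δ (x + s) + tent δ x)) :=
          lintegral_mono fun x => ENNReal.ofReal_le_ofReal (key x)
      _ = ENNReal.ofReal (∫ x in Icc (0:ℝ) 1,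
          (t / δ) ^ (p * θ) * (tent δ (x + s) + tent δ x)) := by
          rw [ofReal_integral_eq_lintegral_ofReal]
          · apply Continuous.integrableOn_Icc
            have := tent_cont δ
            fun_prop
          · refine Eventually.of_forall fun x => ?_
            have a0 := tent_nonneg δ (x + s)
            have b0 := tent_nonneg δ x
            positivity
      _ ≤ _ := by
          apply ENNReal.ofReal_le_ofReal
          rw [integral_const_mul]
          gcongr
          rw [integral_Icc_eq_integral_Ioc, ← intervalIntegral.integral_of_le zero_le_one,
            intervalIntegral.integral_add]
          · have h1 := tent_integral hδ hδ2 s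
            have h2 := tent_integral hδ hδ2 0
            simp only [add_zero] at h2
            linarith
          · apply Continuous.intervalIntegrable
            have := tent_cont δ
            fun_prop
          · exact (tent_cont δ).intervalIntegrable _ _
  unfold lpNorm1
  calc _ ≤ (ENNReal.ofReal ((t / δ) ^ (p * θ) * (4 * δ))) ^ (1 / p) := by gcongr
    _ = ENNReal.ofReal (((t / δ) ^ (p * θ) * (4 * δ)) ^ (1 / p)) := by
        rw [ENNReal.ofReal_rpow_of_nonneg (by positivity) (by positivity)]
    _ ≤ _ := by
        apply ENNReal.ofReal_le_ofReal
        rw [Real.mul_rpow (by positivity) (by positivity), ← Real.rpow_mul htd,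
          Real.mul_rpow (by positivity) (by positivity)]
        have e : p * θ * (1 / p) = θ := by field_simp
        rw [e]
        have : (4 : ℝ) ^ (1 / p) ≤ 4 := by
          calc (4 : ℝ) ^ (1 / p) ≤ 4 ^ (1 : ℝ) :=
                Real.rpow_le_rpow_of_exponent_le (by norm_num) (by rw [div_le_one hp0]; exact hp)
            _ = 4 := by simp
        calc (t / δ) ^ θ * ((4 : ℝ) ^ (1 / p) * δ ^ (1 / p))
            ≤ (t / δ) ^ θ * (4 * δ ^ (1 / p)) := by gcongr
          _ = _ := by ring

lemma lpNorm2_prod {p : ℝ} (hp : 0 < p) (a b : ℝ → ℝ) (ha : Measurable a) (hb : Measurable b) :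
    lpNorm2 p (fun x y => a x * b y) = lpNorm1 p a * lpNorm1 p b := by
  unfold lpNorm2 lpNorm1
  rw [← ENNReal.mul_rpow_of_nonneg _ _ (by positivity)]
  congr 1
  have : ∀ x y, ENNReal.ofReal (|a x * b y| ^ p)
      = ENNReal.ofReal (|a x| ^ p) * ENNReal.ofReal (|b y| ^ p) := by
    intro x y
    rw [abs_mul, Real.mul_rpow (abs_nonneg _) (abs_nonneg _), ENNReal.ofReal_mul (by positivity)]
  simp_rw [this]
  have hm : Measurable fun y => ENNReal.ofReal (|b y| ^ p) := by fun_prop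
  have hm' : Measurable fun y => ENNReal.ofReal (|a y| ^ p) := by fun_prop
  simp_rw [lintegral_const_mul _ hm]
  rw [lintegral_mul_const _ hm']

lemma mixed_le {p u v : ℝ} (hp : 0 < p) (g h : ℝ → ℝ) (hg : Measurable g) (hh : Measurable h)
    (C D : ℝ≥0∞) (hC : ∀ s ∈ Icc 0 u, lpNorm1 p (fun x => g (x + s) - g x) ≤ C)
    (hD : ∀ s ∈ Icc 0 v, lpNorm1 p (fun x => h (x + s) - h x) ≤ D) :
    mixedModulus p (fun x y => g x * h y) u v ≤ C * D := by
  unfold mixedModulus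
  refine iSup₂_le fun s hs => iSup₂_le fun t ht => ?_
  have e : (fun x y => g (x + s) * h (y + t) - g (x + s) * h y - g x * h (y + t) + g x * h y)
      = fun x y => (g (x + s) - g x) * (h (y + t) - h y) := by
    funext x y; ring
  rw [e, lpNorm2_prod hp (fun x => g (x + s) - g x) (fun y => h (y + t) - h y)
    (by fun_prop) (by fun_prop)]
  exact mul_le_mul' (hC s hs) (hD t ht)

lemma basic_int {p θ a : ℝ} (ha : 0 ≤ a) (hθ : 1 / p < θ) :
    ∫⁻ t in Ioc (0:ℝ) 1, ENNReal.ofReal (t ^ (-(1/p)) / t) * ENNReal.ofReal (a * t ^ θ)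
      = ENNReal.ofReal (a / (θ - 1 / p)) := by
  have h1 : ∫⁻ t in Ioc (0:ℝ) 1, ENNReal.ofReal (t ^ (-(1/p)) / t) * ENNReal.ofReal (a * t ^ θ)
      = ∫⁻ t in Ioc (0:ℝ) 1, ENNReal.ofReal (a * t ^ (θ - 1 / p - 1)) := by
    apply setLIntegral_congr_fun measurableSet_Ioc
    intro t ht
    have ht0 : 0 < t := ht.1
    simp only
    rw [← ENNReal.ofReal_mul (by positivity)]
    congr 1
    rw [Real.rpow_sub ht0, Real.rpow_sub ht0, Real.rpow_neg ht0.le, Real.rpow_one]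
    field_simp
  have hlt : -1 < θ - 1 / p - 1 := by linarith
  have hint := intervalIntegral.intervalIntegrable_rpow' (a := 0) (b := 1) hlt
  rw [h1, ← ofReal_integral_eq_lintegral_ofReal, integral_const_mul,
    ← intervalIntegral.integral_of_le zero_le_one, integral_rpow (Or.inl hlt)]
  · congr 1
    have : θ - 1 / p - 1 + 1 = θ - 1 / p := by ring
    rw [this, Real.one_rpow, Real.zero_rpow (by linarith)]
    ring
  · exact ((intervalIntegrable_iff_integrableOn_Ioc_of_le zero_le_one).1 hint).const_mul a
  · filter_upwards [ae_restrict_mem measurableSet_Ioc] with t ht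
    have ht0 : 0 < t := ht.1
    positivity

lemma Kp_le {p θ φ a b C D : ℝ} (hp : 0 < p) (g h : ℝ → ℝ) (hg : Measurable g)
    (hh : Measurable h) (ha : 0 ≤ a) (hb : 0 ≤ b) (hC0 : 0 ≤ C) (hD0 : 0 ≤ D)
    (hθ : 1 / p < θ) (hφ : 1 / p < φ)
    (hC : ∀ s ∈ Icc (0:ℝ) 1, lpNorm1 p (fun x => g (x + s) - g x) ≤ ENNReal.ofReal C)
    (hD : ∀ s ∈ Icc (0:ℝ) 1, lpNorm1 p (fun x => h (x + s) - h x) ≤ ENNReal.ofReal D)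
    (h1 : ∀ t, ∀ s ∈ Icc (0:ℝ) t,
      lpNorm1 p (fun x => g (x + s) - g x) ≤ ENNReal.ofReal (a * t ^ θ))
    (h2 : ∀ t, ∀ s ∈ Icc (0:ℝ) t,
      lpNorm1 p (fun x => h (x + s) - h x) ≤ ENNReal.ofReal (b * t ^ φ)) :
    Kp p (fun x y => g x * h y)
      ≤ ENNReal.ofReal (a / (θ - 1 / p) * D + C * (b / (φ - 1 / p))) := by
  have e1 : 0 < θ - 1 / p := by linarith
  have e2 : 0 < φ - 1 / p := by linarith
  unfold Kp
  calc _ ≤ ∫⁻ t in Ioc (0:ℝ) 1,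
        (ENNReal.ofReal (t ^ (-(1/p)) / t) * ENNReal.ofReal (a * t ^ θ) * ENNReal.ofReal D
        + ENNReal.ofReal C * (ENNReal.ofReal (t ^ (-(1/p)) / t) * ENNReal.ofReal (b * t ^ φ))) := by
        apply lintegral_mono
        intro t
        calc _ ≤ ENNReal.ofReal (t ^ (-(1/p)) / t) * (ENNReal.ofReal (a * t ^ θ) * ENNReal.ofReal D
              + ENNReal.ofReal C * ENNReal.ofReal (b * t ^ φ)) := by
              dsimp only
              gcongr
              · exact mixed_le hp g h hg hh _ _ (h1 t) hD
              · exact mixed_le hp g h hg hh _ _ hC (h2 t)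
          _ = _ := by ring
    _ = _ := by
        rw [lintegral_add_left (by fun_prop), lintegral_mul_const _ (by fun_prop),
          lintegral_const_mul _ (by fun_prop), basic_int ha hθ, basic_int hb hφ,
          ← ENNReal.ofReal_mul (by positivity), ← ENNReal.ofReal_mul (by positivity),
          ← ENNReal.ofReal_add (by positivity) (by positivity)]

lemma Ip_le {p θ φ a b : ℝ} (hp : 0 < p) (g h : ℝ → ℝ) (hg : Measurable g)
    (hh : Measurable h) (ha : 0 ≤ a) (hb : 0 ≤ b)
    (hθ : 1 / p < θ) (hφ : 1 / p < φ)
    (h1 : ∀ t, ∀ s ∈ Icc (0:ℝ) t,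
      lpNorm1 p (fun x => g (x + s) - g x) ≤ ENNReal.ofReal (a * t ^ θ))
    (h2 : ∀ t, ∀ s ∈ Icc (0:ℝ) t,
      lpNorm1 p (fun x => h (x + s) - h x) ≤ ENNReal.ofReal (b * t ^ φ)) :
    Ip p (fun x y => g x * h y)
      ≤ ENNReal.ofReal (a / (θ - 1 / p) * (b / (φ - 1 / p))) := by
  have e1 : 0 < θ - 1 / p := by linarith
  have e2 : 0 < φ - 1 / p := by linarith
  unfold Ip
  calc _ ≤ ∫⁻ u in Ioc (0:ℝ) 1, ∫⁻ v in Ioc (0:ℝ) 1,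
        (ENNReal.ofReal (u ^ (-(1/p)) / u) * ENNReal.ofReal (a * u ^ θ))
        * (ENNReal.ofReal (v ^ (-(1/p)) / v) * ENNReal.ofReal (b * v ^ φ)) := by
        apply setLIntegral_mono' measurableSet_Ioc
        intro u hu
        apply setLIntegral_mono' measurableSet_Ioc
        intro v hv
        have hu0 : 0 < u := hu.1
        have hv0 : 0 < v := hv.1
        have e : (u * v) ^ (-(1/p)) / (u * v) = (u ^ (-(1/p)) / u) * (v ^ (-(1/p)) / v) := by
          rw [Real.mul_rpow hu0.le hv0.le]; field_simp
        rw [e, ENNReal.ofReal_mul (by positivity)]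
        calc _ ≤ ENNReal.ofReal (u ^ (-(1/p)) / u) * ENNReal.ofReal (v ^ (-(1/p)) / v)
              * (ENNReal.ofReal (a * u ^ θ) * ENNReal.ofReal (b * v ^ φ)) := by
              gcongr
              exact mixed_le hp g h hg hh _ _ (h1 u) (h2 v)
          _ = _ := by ring
    _ = _ := by
        have : ∀ u : ℝ, ∫⁻ v in Ioc (0:ℝ) 1,
            (ENNReal.ofReal (u ^ (-(1/p)) / u) * ENNReal.ofReal (a * u ^ θ))
            * (ENNReal.ofReal (v ^ (-(1/p)) / v) * ENNReal.ofReal (b * v ^ φ))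
            = (ENNReal.ofReal (u ^ (-(1/p)) / u) * ENNReal.ofReal (a * u ^ θ))
              * ENNReal.ofReal (b / (φ - 1 / p)) := by
          intro u
          rw [lintegral_const_mul _ (by fun_prop), basic_int hb hφ]
        simp_rw [this]
        rw [lintegral_mul_const _ (by fun_prop), basic_int ha hθ,
          ← ENNReal.ofReal_mul (by positivity)]

lemma vp2_ge {p : ℝ} (hp : 0 < p) (g h : ℝ → ℝ) (hg0 : g 0 = 1) (hh0 : h 0 = 1)
    (hg : g (1 / 2) = 0) (hh : h (1 / 2) = 0) :
    1 ≤ vp2 p (fun x y => g x * h y) := by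
  unfold vp2
  have hx : ∀ i < 2, (fun n : ℕ => (n : ℝ) / 2) i < (fun n : ℕ => (n : ℝ) / 2) (i + 1) := by
    intro i _; simp only; push_cast; linarith
  have hx2 : (fun n : ℕ => (n : ℝ) / 2) 2 = (fun n : ℕ => (n : ℝ) / 2) 0 + 1 := by norm_num
  refine le_trans ?_ (le_iSup_of_le 2 <| le_iSup_of_le 2 <|
    le_iSup_of_le (fun n : ℕ => (n : ℝ) / 2) <| le_iSup_of_le (fun n : ℕ => (n : ℝ) / 2) <|
    le_iSup_of_le hx <| le_iSup_of_le hx2 <| le_iSup_of_le hx <| le_iSup_of_le hx2 le_rfl)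
  rw [ENNReal.one_le_ofReal]
  apply Real.one_le_rpow _ (by positivity)
  set F : ℕ → ℕ → ℝ := fun i j => |g (((i + 1 : ℕ) : ℝ) / 2) * h (((j + 1 : ℕ) : ℝ) / 2)
    - g (((i + 1 : ℕ) : ℝ) / 2) * h ((j : ℝ) / 2) - g ((i : ℝ) / 2) * h (((j + 1 : ℕ) : ℝ) / 2)
    + g ((i : ℝ) / 2) * h ((j : ℝ) / 2)| ^ p with hF
  have F0 : ∀ i j, 0 ≤ F i j := fun i j => by positivity
  have F1 : F 0 0 = 1 := by
    have : ((0 + 1 : ℕ) : ℝ) / 2 = 1 / 2 := by norm_num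
    simp only [hF, this, hg, hh, Nat.cast_zero, zero_div, hg0, hh0]
    norm_num
  have : 1 ≤ ∑ i ∈ Finset.range 2, ∑ j ∈ Finset.range 2, F i j := by
    simp only [Finset.sum_range_succ, Finset.sum_range_zero]
    linarith [F0 0 1, F0 1 0, F0 1 1]
  exact this

/-- Combined consequence for products of tents. -/
lemma combined {p δ₁ δ₂ θ φ A α β : ℝ} (hp : 2 < p) (hδ₁ : 0 < δ₁) (hδ₁' : δ₁ ≤ 1 / 2)
    (hδ₂ : 0 < δ₂) (hδ₂' : δ₂ ≤ 1 / 2) (hθ : 1 / p < θ) (hθ' : p * θ ≤ p - 1)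
    (hφ : 1 / p < φ) (hφ' : p * φ ≤ p - 1) (hA : 0 < A) (hα : 0 < α) (hβ : 0 < β)
    (hbound : ∀ f : ℝ → ℝ → ℝ,
      Continuous (Function.uncurry f) → MemLp2 p f → Ip p f < ⊤ →
        vp2 p f ≤ ENNReal.ofReal A *
          (mixedModulus p f 1 1 + ENNReal.ofReal α * Kp p f + ENNReal.ofReal β * Ip p f))
    (C D P Q : ℝ) (hC : C = 4 * δ₁ ^ (1 / p)) (hD : D = 4 * δ₂ ^ (1 / p))
    (hP : P = 4 * δ₁ ^ (1 / p - θ) / (θ - 1 / p))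
    (hQ : Q = 4 * δ₂ ^ (1 / p - φ) / (φ - 1 / p)) :
    1 ≤ A * (C * D + α * (P * D + C * Q) + β * (P * Q)) := by
  have hp0 : 0 < p := by linarith
  have hpi : 0 < 1 / p := by positivity
  have e1 : 0 < θ - 1 / p := by linarith
  have e2 : 0 < φ - 1 / p := by linarith
  have hC0 : 0 ≤ C := by rw [hC]; positivity
  have hD0 : 0 ≤ D := by rw [hD]; positivity
  have hP0 : 0 ≤ P := by rw [hP]; positivity
  have hQ0 : 0 ≤ Q := by rw [hQ]; positivity
  have hg := tent_cont δ₁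
  have hh := tent_cont δ₂
  have b1 : ∀ s ∈ Icc (0:ℝ) 1, lpNorm1 p (fun x => tent δ₁ (x + s) - tent δ₁ x)
      ≤ ENNReal.ofReal C := by
    intro s hs
    have := tent_mod (p := p) (θ := 0) hδ₁ hδ₁' (by linarith) le_rfl (by linarith) hs
    simpa [hC] using this
  have b2 : ∀ s ∈ Icc (0:ℝ) 1, lpNorm1 p (fun x => tent δ₂ (x + s) - tent δ₂ x)
      ≤ ENNReal.ofReal D := by
    intro s hs
    have := tent_mod (p := p) (θ := 0) hδ₂ hδ₂' (by linarith) le_rfl (by linarith) hs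
    simpa [hD] using this
  have gen : ∀ δ θ : ℝ, 0 < δ → δ ≤ 1 / 2 → 1 / p < θ → p * θ ≤ p - 1 →
      ∀ t, ∀ s ∈ Icc (0:ℝ) t, lpNorm1 p (fun x => tent δ (x + s) - tent δ x)
      ≤ ENNReal.ofReal (4 * δ ^ (1 / p - θ) * t ^ θ) := by
    intro δ θ h1 h2 h3 h4 t s hs
    have := tent_mod (p := p) (θ := θ) h1 h2 (by linarith) (by linarith) h4 hs
    refine this.trans (le_of_eq ?_)
    congr 1
    rw [Real.div_rpow (hs.1.trans hs.2) h1.le, Real.rpow_sub h1]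
    field_simp
  have b3 := gen δ₁ θ hδ₁ hδ₁' hθ hθ'
  have b4 := gen δ₂ φ hδ₂ hδ₂' hφ hφ'
  have hK := Kp_le hp0 _ _ hg.measurable hh.measurable (by positivity) (by positivity) hC0 hD0
    hθ hφ b1 b2 b3 b4
  have hI := Ip_le hp0 _ _ hg.measurable hh.measurable (by positivity) (by positivity)
    hθ hφ b3 b4
  rw [← hP, ← hQ] at hK hI
  have hM := mixed_le (u := 1) (v := 1) hp0 _ _ hg.measurable hh.measurable _ _ b1 b2
  have hcont : Continuous (Function.uncurry fun x y => tent δ₁ x * tent δ₂ y) := by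
    unfold Function.uncurry
    fun_prop
  have hmem : MemLp2 p (fun x y => tent δ₁ x * tent δ₂ y) := by
    refine ⟨hcont.measurable, ⟨fun x y => ?_, fun x y => ?_⟩, ?_⟩
    · simp only [tent_per]
    · simp only [tent_per]
    · unfold lpNorm2
      apply ENNReal.rpow_lt_top_of_nonneg (by positivity)
      apply ne_of_lt
      calc _ ≤ ∫⁻ x in Icc (0:ℝ) 1, ∫⁻ y in Icc (0:ℝ) 1, (1 : ℝ≥0∞) := by
            apply lintegral_mono; intro x
            apply lintegral_mono; intro y
            have a0 := tent_nonneg δ₁ x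
            have b0 := tent_nonneg δ₂ y
            dsimp only
            rw [ENNReal.ofReal_le_one]
            apply Real.rpow_le_one (abs_nonneg _) _ hp0.le
            rw [abs_of_nonneg (by positivity)]
            exact mul_le_one₀ (tent_le_one hδ₁ x) b0 (tent_le_one hδ₂ y)
        _ < ⊤ := by simp
  have hv := vp2_ge hp0 (tent δ₁) (tent δ₂) (tent_zero _) (tent_zero _)
    (tent_half hδ₁ hδ₁') (tent_half hδ₂ hδ₂')
  have hb := hbound _ hcont hmem (hI.trans_lt ENNReal.ofReal_lt_top)
  have : (1 : ℝ≥0∞) ≤ ENNReal.ofReal (A * (C * D + α * (P * D + C * Q) + β * (P * Q))) := by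
    calc (1 : ℝ≥0∞) ≤ _ := hv
      _ ≤ _ := hb
      _ ≤ ENNReal.ofReal A * (ENNReal.ofReal C * ENNReal.ofReal D
          + ENNReal.ofReal α * ENNReal.ofReal (P * D + C * Q)
          + ENNReal.ofReal β * ENNReal.ofReal (P * Q)) := by gcongr
      _ = _ := by
          rw [← ENNReal.ofReal_mul hC0, ← ENNReal.ofReal_mul hα.le, ← ENNReal.ofReal_mul hβ.le,
            ← ENNReal.ofReal_add (by positivity) (by positivity),
            ← ENNReal.ofReal_add (by positivity) (by positivity), ← ENNReal.ofReal_mul hA.le]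
  exact ENNReal.one_le_ofReal.1 this

lemma liminf_pos_of {u : ℝ → ℝ} {c : ℝ} (hc : 0 < c) (h1 : ∀ᶠ p in atTop, c ≤ u p)
    (h2 : ∀ᶠ p in atTop, u p ≤ 1) : 0 < Filter.liminf u Filter.atTop := by
  refine hc.trans_le (le_liminf_of_le ?_ h1)
  exact IsBoundedUnder.isCoboundedUnder_ge ⟨1, by simpa using h2⟩

/-- If `α_p ≤ 1/p`, `β_p ≤ 1/p²` for `p > 2`, and there is `A > 0` with
`v_p⁽²⁾(f) ≤ A [ω(f;1,1)_p + α_p K_p(f) + β_p I_p(f)]` for every `p > 2` and every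
continuous `f ∈ L^p([0,1]²)` with `I_p(f) < ∞`, then
`liminf_{p→∞} p α_p > 0` and `liminf_{p→∞} p² β_p > 0`. -/
theorem statement12 (α β : ℝ → ℝ)
    (hα : ∀ p : ℝ, 2 < p → 0 < α p ∧ α p ≤ 1 / p)
    (hβ : ∀ p : ℝ, 2 < p → 0 < β p ∧ β p ≤ 1 / p ^ 2)
    (A : ℝ) (hA : 0 < A)
    (hbound : ∀ p : ℝ, 2 < p → ∀ f : ℝ → ℝ → ℝ,
      Continuous (Function.uncurry f) → MemLp2 p f → Ip p f < ⊤ →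
        vp2 p f ≤ ENNReal.ofReal A *
          (mixedModulus p f 1 1 + ENNReal.ofReal (α p) * Kp p f
            + ENNReal.ofReal (β p) * Ip p f)) :
    0 < Filter.liminf (fun p : ℝ => p * α p) Filter.atTop ∧
    0 < Filter.liminf (fun p : ℝ => p ^ 2 * β p) Filter.atTop := by
  set η : ℝ := 1 / (160 * A + 2) with hη
  have η0 : 0 < η := by positivity
  have η1 : η ≤ 1 / 2 := by
    rw [hη]; apply one_div_le_one_div_of_le <;> linarith
  have ηA : 160 * (A * η) ≤ 1 := by
    rw [hη, mul_one_div, ← mul_div_assoc, div_le_one (by positivity)]; linarith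
  have hAη : 0 < A * η := by positivity
  -- facts about δ = η^(2p)
  have hδ : ∀ p : ℝ, 4 ≤ p → 0 < η ^ (2 * p) ∧ η ^ (2 * p) ≤ 1 / 2 ∧
      4 * (η ^ (2 * p)) ^ (1 / p) = 4 * η ^ 2 ∧
      4 * (η ^ (2 * p)) ^ (1 / p - 3 / (2 * p)) / (3 / (2 * p) - 1 / p) = 8 * p / η := by
    intro p hp
    have hp0 : 0 < p := by linarith
    refine ⟨by positivity, ?_, ?_, ?_⟩
    · calc η ^ (2 * p) ≤ η ^ (1 : ℝ) :=
            Real.rpow_le_rpow_of_exponent_ge η0 (by linarith) (by linarith)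
        _ ≤ 1 / 2 := by simpa using η1
    · rw [← Real.rpow_mul η0.le]
      have : 2 * p * (1 / p) = (2 : ℕ) := by field_simp; norm_num
      rw [this, Real.rpow_natCast]
    · rw [← Real.rpow_mul η0.le]
      have e : 2 * p * (1 / p - 3 / (2 * p)) = -1 := by field_simp; norm_num
      have e2 : 3 / (2 * p) - 1 / p = 1 / (2 * p) := by field_simp; norm_num
      rw [e, e2, Real.rpow_neg_one]
      field_simp; norm_num
  have hθ : ∀ p : ℝ, 4 ≤ p → 1 / p < 3 / (2 * p) ∧ p * (3 / (2 * p)) ≤ p - 1 := by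
    intro p hp
    have hp0 : 0 < p := by linarith
    constructor
    · rw [div_lt_div_iff₀ hp0 (by positivity)]; linarith
    · have : p * (3 / (2 * p)) = 3 / 2 := by field_simp
      rw [this]; linarith
  constructor
  · apply liminf_pos_of (c := η / (64 * A)) (by positivity)
    · filter_upwards [eventually_ge_atTop 4, eventually_ge_atTop (128 / η ^ 2)] with p hp hp'
      have hp0 : 0 < p := by linarith
      obtain ⟨d0, d1, d2, d3⟩ := hδ p hp
      obtain ⟨t1, t2⟩ := hθ p hp
      obtain ⟨a0, a1⟩ := hα p (by linarith)
      obtain ⟨b0, b1⟩ := hβ p (by linarith)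
      have t3 : 1 / p < 1 / 2 + 1 / p := by linarith
      have t4 : p * (1 / 2 + 1 / p) ≤ p - 1 := by
        have : p * (1 / 2 + 1 / p) = p / 2 + 1 := by field_simp
        rw [this]; linarith
      have key := combined (by linarith) d0 d1 (by norm_num : (0:ℝ) < 1 / 2) le_rfl t1 t2 t3 t4
        hA a0 b0 (hbound p (by linarith)) _ _ _ _ d2.symm rfl d3.symm rfl
      set D : ℝ := 4 * (1 / 2 : ℝ) ^ (1 / p) with hD
      set Q : ℝ := 4 * (1 / 2 : ℝ) ^ (1 / p - (1 / 2 + 1 / p)) / (1 / 2 + 1 / p - 1 / p) with hQ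
      have hD0 : 0 ≤ D := by positivity
      have hD4 : D ≤ 4 := by
        have : (1 / 2 : ℝ) ^ (1 / p) ≤ 1 :=
          Real.rpow_le_one (by norm_num) (by norm_num) (by positivity)
        linarith
      have eQ : Q = 8 * (1 / 2 : ℝ) ^ (-(1 / 2) : ℝ) := by
        rw [hQ]
        have e1 : 1 / p - (1 / 2 + 1 / p) = -(1 / 2) := by ring
        have e2 : 1 / 2 + 1 / p - 1 / p = 1 / 2 := by ring
        rw [e1, e2]; ring
      have hQ0 : 0 ≤ Q := by rw [eQ]; positivity
      have hQ16 : Q ≤ 16 := by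
        have : (1 / 2 : ℝ) ^ (-(1 / 2) : ℝ) ≤ (1 / 2 : ℝ) ^ (-1 : ℝ) :=
          Real.rpow_le_rpow_of_exponent_ge (by norm_num) (by norm_num) (by norm_num)
        rw [Real.rpow_neg_one] at this
        rw [eQ]; norm_num at this ⊢; linarith
      have a2 : α p ≤ 1 := a1.trans (by rw [div_le_one hp0]; linarith)
      have i1 : 4 * η ^ 2 * D ≤ 8 * η := by nlinarith
      have i2 : α p * (4 * η ^ 2 * Q) ≤ 32 * η := by
        calc α p * (4 * η ^ 2 * Q) ≤ 1 * (4 * η ^ 2 * 16) := by gcongr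
          _ ≤ 32 * η := by nlinarith
      have i3 : α p * (8 * p / η * D) ≤ 32 * (p * α p) / η := by
        calc α p * (8 * p / η * D) ≤ α p * (8 * p / η * 4) := by gcongr
          _ = _ := by ring
      have i4 : β p * (8 * p / η * Q) ≤ η := by
        calc β p * (8 * p / η * Q) ≤ 1 / p ^ 2 * (8 * p / η * 16) := by gcongr
          _ = 128 / (p * η) := by field_simp; norm_num
          _ ≤ η := by
            rw [div_le_iff₀ (by positivity)]
            rw [div_le_iff₀ (by positivity)] at hp'
            linarith
      have key2 : 1 ≤ A * (41 * η + 32 * (p * α p) / η) := by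
        refine key.trans (mul_le_mul_of_nonneg_left ?_ hA.le)
        linarith
      have e3 : A * (41 * η + 32 * (p * α p) / η) = 41 * (A * η) + 32 * A * (p * α p) / η := by
        ring
      rw [e3] at key2
      have h5 : 1 / 2 ≤ 32 * A * (p * α p) / η := by linarith
      rw [le_div_iff₀ η0] at h5
      rw [div_le_iff₀ (by positivity)]
      linarith
    · filter_upwards [eventually_gt_atTop 2] with p hp
      have hp0 : 0 < p := by linarith
      have := (hα p hp).2
      rw [le_div_iff₀ hp0] at this
      linarith
  · apply liminf_pos_of (c := η ^ 2 / (128 * A)) (by positivity)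
    · filter_upwards [eventually_ge_atTop 4] with p hp
      have hp0 : 0 < p := by linarith
      obtain ⟨d0, d1, d2, d3⟩ := hδ p hp
      obtain ⟨t1, t2⟩ := hθ p hp
      obtain ⟨a0, a1⟩ := hα p (by linarith)
      obtain ⟨b0, b1⟩ := hβ p (by linarith)
      have key := combined (by linarith) d0 d1 d0 d1 t1 t2 t1 t2
        hA a0 b0 (hbound p (by linarith)) _ _ _ _ d2.symm d2.symm d3.symm d3.symm
      have η3 : η ^ 2 * η ^ 2 ≤ η := by
        have h2 : η ^ 2 ≤ 1 := by nlinarith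
        nlinarith [sq_nonneg η]
      have i1 : α p * (8 * p / η * (4 * η ^ 2) + 4 * η ^ 2 * (8 * p / η)) ≤ 64 * η := by
        calc _ ≤ 1 / p * (8 * p / η * (4 * η ^ 2) + 4 * η ^ 2 * (8 * p / η)) := by gcongr
          _ = 64 * η := by field_simp; norm_num
      have i2 : β p * (8 * p / η * (8 * p / η)) = 64 * (p ^ 2 * β p) / η ^ 2 := by
        field_simp; norm_num
      have key2 : 1 ≤ A * (80 * η + 64 * (p ^ 2 * β p) / η ^ 2) := by
        refine key.trans (mul_le_mul_of_nonneg_left ?_ hA.le)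
        linarith
      have e3 : A * (80 * η + 64 * (p ^ 2 * β p) / η ^ 2)
          = 80 * (A * η) + 64 * A * (p ^ 2 * β p) / η ^ 2 := by ring
      rw [e3] at key2
      have h5 : 1 / 2 ≤ 64 * A * (p ^ 2 * β p) / η ^ 2 := by linarith
      rw [le_div_iff₀ (by positivity)] at h5
      rw [div_le_iff₀ (by positivity)]
      linarith
    · filter_upwards [eventually_gt_atTop 2] with p hp
      have hp0 : 0 < p := by linarith
      have := (hβ p hp).2
      rw [le_div_iff₀ (by positivity)] at this
      linarith
end

section
/- There exists an absolute constant A > 0 such that for every 1 ≤ p < ∞, every n,m ∈ ℕ, and every trigonometric polynomial T of degree (n,m) in two variables, v_p^{(2)}(T) ≤ A·(nm)^{1/p}·‖T‖_p. -/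
open MeasureTheory Filter Set
open scoped ENNReal

noncomputable def ek (k : ℤ) (x : ℝ) : ℂ := Complex.exp ((2 * Real.pi * Complex.I * k) * x)

lemma ek_cont (k : ℤ) : Continuous (ek k) := by
  unfold ek; fun_prop

lemma ek_add (k l : ℤ) (x : ℝ) : ek (k + l) x = ek k x * ek l x := by
  unfold ek; rw [← Complex.exp_add]; congr 1; push_cast; ring

lemma ek_sub_arg (k : ℤ) (x t : ℝ) : ek k (x - t) = ek k x * ek (-k) t := by
  unfold ek; rw [← Complex.exp_add]; congr 1; push_cast; ring

lemma ek_conj (k : ℤ) (x : ℝ) : (starRingEnd ℂ) (ek k x) = ek (-k) x := by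
  unfold ek; rw [← Complex.exp_conj]; congr 1; simp [Complex.conj_ofNat]

lemma ek_norm (k : ℤ) (x : ℝ) : ‖ek k x‖ = 1 := by
  unfold ek; rw [Complex.norm_exp]; simp

lemma ek_int (k : ℤ) (a : ℝ) : ∫ x in a..(a+1), ek k x = if k = 0 then 1 else 0 := by
  split_ifs with h
  · subst h; simp [ek]
  · unfold ek
    rw [integral_exp_mul_complex]
    · have : Complex.exp ((2 * Real.pi * Complex.I * k) * ((a + 1 : ℝ) : ℂ))
        = Complex.exp ((2 * Real.pi * Complex.I * k) * (a : ℂ)) := by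
        push_cast
        rw [mul_add, Complex.exp_add, mul_one]
        have := Complex.exp_int_mul_two_pi_mul_I k
        rw [show (2 * Real.pi * Complex.I * k : ℂ) = k * (2 * Real.pi * Complex.I) by ring, this]
        simp
      rw [this]; simp
    · have := Complex.two_pi_I_ne_zero
      exact mul_ne_zero this (by exact_mod_cast h)

lemma parseval (S : Finset ℤ) (c : ℤ → ℂ) (a : ℝ) :
    ∫ x in a..(a+1), ‖∑ k ∈ S, c k * ek k x‖ ^ 2 = ∑ k ∈ S, ‖c k‖ ^ 2 := by
  have hc : ∀ k, Continuous (ek k) := ek_cont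
  have h : ((∫ x in a..(a+1), ‖∑ k ∈ S, c k * ek k x‖ ^ 2 : ℝ) : ℂ)
      = ((∑ k ∈ S, ‖c k‖ ^ 2 : ℝ) : ℂ) := by
    rw [← intervalIntegral.integral_ofReal]
    have : ∀ x : ℝ, ((‖∑ k ∈ S, c k * ek k x‖ ^ 2 : ℝ) : ℂ)
        = ∑ k ∈ S, ∑ l ∈ S, (c k * (starRingEnd ℂ) (c l)) * ek (k + -l) x := by
      intro x
      push_cast
      rw [← Complex.mul_conj', map_sum, Finset.sum_mul_sum]
      refine Finset.sum_congr rfl fun k _ => Finset.sum_congr rfl fun l _ => ?_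
      rw [map_mul, ek_conj, ek_add]; ring
    simp_rw [this]
    rw [intervalIntegral.integral_finsetSum]
    · push_cast
      refine Finset.sum_congr rfl fun k hk => ?_
      rw [intervalIntegral.integral_finsetSum]
      · simp_rw [intervalIntegral.integral_const_mul, ek_int]
        rw [Finset.sum_eq_single k]
        · simp [Complex.mul_conj']
        · intro l _ hl
          rw [if_neg (by omega)]; simp
        · intro h; exact absurd hk h
      · intro l _
        exact (Continuous.mul continuous_const (hc _)).intervalIntegrable _ _
    · intro k _
      exact (continuous_finsetSum _ fun l _ => Continuous.mul continuous_const (hc _)).intervalIntegrable _ _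
  exact_mod_cast h

noncomputable def DS (S : Finset ℤ) (x : ℝ) : ℂ := ∑ k ∈ S, ek k x
noncomputable def DS' (S : Finset ℤ) (x : ℝ) : ℂ := ∑ k ∈ S, (2 * Real.pi * Complex.I * k) * ek k x

lemma DS_cont (S) : Continuous (DS S) := continuous_finsetSum _ fun k _ => ek_cont k
lemma DS'_cont (S) : Continuous (DS' S) :=
  continuous_finsetSum _ fun k _ => Continuous.mul continuous_const (ek_cont k)

lemma DS_deriv (S) (x : ℝ) : HasDerivAt (DS S) (DS' S x) x := by
  unfold DS DS'
  refine HasDerivAt.fun_sum fun k _ => ?_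
  unfold ek
  have h1 : HasDerivAt (fun x : ℝ => ((2 * Real.pi * Complex.I * k) * (x : ℂ) : ℂ))
      ((2 * Real.pi * Complex.I * k) * 1) x :=
    (HasDerivAt.ofReal_comp (hasDerivAt_id x)).const_mul _
  have := h1.cexp
  rw [mul_one] at this
  rw [mul_comm (2 * Real.pi * Complex.I * k : ℂ) (Complex.exp _)]
  exact this

lemma DS_int (S) (a : ℝ) : ∫ x in a..(a+1), ‖DS S x‖ ^ 2 = S.card := by
  have := parseval S (fun _ => 1) a
  simpa [DS] using this

lemma DS'_int (S : Finset ℤ) (M : ℝ) (hM : ∀ k ∈ S, |(k:ℝ)| ≤ M) (a : ℝ) :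
    ∫ x in a..(a+1), ‖DS' S x‖ ^ 2 ≤ S.card * (2 * Real.pi * M) ^ 2 := by
  have := parseval S (fun k => 2 * Real.pi * Complex.I * k) a
  unfold DS'
  rw [this, ← nsmul_eq_mul]
  refine Finset.sum_le_card_nsmul _ _ _ fun k hk => ?_
  have hn : ‖(2 * Real.pi * Complex.I * k : ℂ)‖ = 2 * Real.pi * |(k:ℝ)| := by
    simp [abs_of_pos Real.pi_pos]
  rw [hn]
  have := hM k hk
  have := Real.pi_pos
  gcongr

noncomputable def Ker (n : ℕ) (x : ℝ) : ℂ :=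
  ((n : ℂ) + 1)⁻¹ * (DS (Finset.Icc 0 (n:ℤ)) x * DS (Finset.Icc (-2 * n : ℤ) n) x)
noncomputable def Ker' (n : ℕ) (x : ℝ) : ℂ :=
  ((n : ℂ) + 1)⁻¹ * (DS' (Finset.Icc 0 (n:ℤ)) x * DS (Finset.Icc (-2 * n : ℤ) n) x
    + DS (Finset.Icc 0 (n:ℤ)) x * DS' (Finset.Icc (-2 * n : ℤ) n) x)

lemma Ker_cont (n) : Continuous (Ker n) :=
  continuous_const.mul ((DS_cont _).mul (DS_cont _))
lemma Ker'_cont (n) : Continuous (Ker' n) :=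
  continuous_const.mul (((DS'_cont _).mul (DS_cont _)).add ((DS_cont _).mul (DS'_cont _)))
lemma Ker_deriv (n) (x : ℝ) : HasDerivAt (Ker n) (Ker' n x) x :=
  ((DS_deriv _ x).mul (DS_deriv _ x)).const_mul _

lemma norm_pre (n : ℕ) : ‖((n : ℂ) + 1)⁻¹‖ = ((n : ℝ) + 1)⁻¹ := by
  rw [norm_inv]; congr 1
  have : ((n : ℂ) + 1) = ((n + 1 : ℕ) : ℂ) := by push_cast; ring
  rw [this, Complex.norm_natCast]; push_cast; ring

lemma cardA (n : ℕ) : ((Finset.Icc 0 (n:ℤ)).card : ℝ) = n + 1 := by simp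
lemma cardB (n : ℕ) : ((Finset.Icc (-2 * n : ℤ) n).card : ℝ) = 3 * n + 1 := by
  rw [Int.card_Icc]
  have : ((n:ℤ) + 1 - -2 * n).toNat = 3 * n + 1 := by omega
  rw [this]; push_cast; ring

lemma Ker_int (n : ℕ) (a : ℝ) : ∫ x in a..(a+1), ‖Ker n x‖ ≤ 2 := by
  set A := Finset.Icc 0 (n:ℤ) with hA
  set B := Finset.Icc (-2 * n : ℤ) n with hB
  have hn : (0:ℝ) ≤ n := Nat.cast_nonneg n
  have c1 : Continuous fun x => ‖DS A x‖ ^ 2 := (DS_cont A).norm.pow 2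
  have c2 : Continuous fun x => ‖DS B x‖ ^ 2 := (DS_cont B).norm.pow 2
  calc ∫ x in a..(a+1), ‖Ker n x‖
      ≤ ∫ x in a..(a+1), ((n : ℝ) + 1)⁻¹ * (2⁻¹ * (‖DS A x‖ ^ 2 + ‖DS B x‖ ^ 2)) := by
        refine intervalIntegral.integral_mono_on (by linarith)
          ((Ker_cont n).norm.intervalIntegrable _ _) (Continuous.intervalIntegrable (by fun_prop) _ _)
          fun x _ => ?_
        unfold Ker
        rw [norm_mul, norm_pre, norm_mul]
        refine mul_le_mul_of_nonneg_left ?_ (by positivity)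
        nlinarith [sq_nonneg (‖DS A x‖ - ‖DS B x‖)]
    _ = ((n : ℝ) + 1)⁻¹ * (2⁻¹ * ((n + 1) + (3 * n + 1))) := by
        rw [intervalIntegral.integral_const_mul, intervalIntegral.integral_const_mul,
          intervalIntegral.integral_add (c1.intervalIntegrable _ _) (c2.intervalIntegrable _ _),
          DS_int, DS_int, cardA, cardB]
    _ ≤ 2 := by
        rw [inv_mul_le_iff₀ (by positivity)]; linarith

lemma Ker'_int (n : ℕ) (h1 : 1 ≤ n) (a : ℝ) : ∫ x in a..(a+1), ‖Ker' n x‖ ≤ 300 * n := by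
  set A := Finset.Icc 0 (n:ℤ) with hA
  set B := Finset.Icc (-2 * n : ℤ) n with hB
  have hn : (1:ℝ) ≤ n := by exact_mod_cast h1
  have hn0 : (0:ℝ) < n := by linarith
  have c1 : Continuous fun x => ‖DS A x‖ ^ 2 := (DS_cont A).norm.pow 2
  have c2 : Continuous fun x => ‖DS B x‖ ^ 2 := (DS_cont B).norm.pow 2
  have c3 : Continuous fun x => ‖DS' A x‖ ^ 2 := (DS'_cont A).norm.pow 2
  have c4 : Continuous fun x => ‖DS' B x‖ ^ 2 := (DS'_cont B).norm.pow 2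
  have key : ∀ u v : ℝ, u * v ≤ 2⁻¹ * ((n:ℝ)⁻¹ * u ^ 2 + n * v ^ 2) := by
    intro u v
    have : (n:ℝ)⁻¹ * (u - n * v) ^ 2 = (n:ℝ)⁻¹ * u ^ 2 + n * v ^ 2 - 2 * (u * v) := by
      field_simp; ring
    have h2 : 0 ≤ (n:ℝ)⁻¹ * (u - n * v) ^ 2 := by positivity
    linarith
  have i3 : ∫ x in a..(a+1), ‖DS' A x‖ ^ 2 ≤ (n + 1) * (2 * Real.pi * n) ^ 2 := by
    rw [← cardA]
    refine DS'_int A n (fun k hk => ?_) a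
    rw [hA, Finset.mem_Icc] at hk
    rw [← Int.cast_abs]
    have : |k| ≤ (n:ℤ) := abs_le.2 ⟨by omega, by omega⟩
    exact_mod_cast this
  have i4 : ∫ x in a..(a+1), ‖DS' B x‖ ^ 2 ≤ (3 * n + 1) * (2 * Real.pi * (2 * n)) ^ 2 := by
    rw [← cardB]
    refine DS'_int B (2 * n) (fun k hk => ?_) a
    rw [hB, Finset.mem_Icc] at hk
    rw [← Int.cast_abs]
    have : |k| ≤ 2 * (n:ℤ) := abs_le.2 ⟨by omega, by omega⟩
    exact_mod_cast this
  have i1 := DS_int A a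
  have i2 := DS_int B a
  rw [cardA] at i1
  rw [cardB] at i2
  calc ∫ x in a..(a+1), ‖Ker' n x‖
      ≤ ∫ x in a..(a+1), ((n : ℝ) + 1)⁻¹ * (2⁻¹ * (((n:ℝ)⁻¹ * ‖DS' A x‖ ^ 2 + n * ‖DS B x‖ ^ 2)
          + ((n:ℝ)⁻¹ * ‖DS' B x‖ ^ 2 + n * ‖DS A x‖ ^ 2))) := by
        refine intervalIntegral.integral_mono_on (by linarith)
          ((Ker'_cont n).norm.intervalIntegrable _ _) (Continuous.intervalIntegrable (by fun_prop) _ _)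
          fun x _ => ?_
        unfold Ker'
        rw [norm_mul, norm_pre]
        gcongr
        refine (norm_add_le _ _).trans ?_
        rw [norm_mul, norm_mul]
        have := key ‖DS' A x‖ ‖DS B x‖
        have := key ‖DS' B x‖ ‖DS A x‖
        linarith [mul_comm ‖DS A x‖ ‖DS' B x‖]
    _ = ((n : ℝ) + 1)⁻¹ * (2⁻¹ * (((n:ℝ)⁻¹ * (∫ x in a..(a+1), ‖DS' A x‖ ^ 2) + n * (3 * n + 1))
          + ((n:ℝ)⁻¹ * (∫ x in a..(a+1), ‖DS' B x‖ ^ 2) + n * (n + 1)))) := by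
        rw [intervalIntegral.integral_const_mul, intervalIntegral.integral_const_mul,
          intervalIntegral.integral_add (Continuous.intervalIntegrable (by fun_prop) _ _)
            (Continuous.intervalIntegrable (by fun_prop) _ _),
          intervalIntegral.integral_add (Continuous.intervalIntegrable (by fun_prop) _ _)
            (Continuous.intervalIntegrable (by fun_prop) _ _),
          intervalIntegral.integral_add (Continuous.intervalIntegrable (by fun_prop) _ _)
            (Continuous.intervalIntegrable (by fun_prop) _ _)]
        simp_rw [intervalIntegral.integral_const_mul]
        rw [i1, i2]
    _ ≤ ((n : ℝ) + 1)⁻¹ * (2⁻¹ * (((n:ℝ)⁻¹ * ((n + 1) * (2 * Real.pi * n) ^ 2) + n * (3 * n + 1))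
          + ((n:ℝ)⁻¹ * ((3 * n + 1) * (2 * Real.pi * (2 * n)) ^ 2) + n * (n + 1)))) := by
        gcongr
    _ ≤ 300 * n := by
        rw [inv_mul_le_iff₀ (by positivity)]
        have e1 : (n:ℝ)⁻¹ * ((n + 1) * (2 * Real.pi * n) ^ 2) = 4 * Real.pi ^ 2 * (n * (n + 1)) := by
          field_simp; ring
        have e2 : (n:ℝ)⁻¹ * ((3 * n + 1) * (2 * Real.pi * (2 * n)) ^ 2)
            = 16 * Real.pi ^ 2 * (n * (3 * n + 1)) := by
          field_simp; ring
        rw [e1, e2]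
        have hpi : Real.pi ^ 2 ≤ 10 := by
          nlinarith [Real.pi_lt_d2, Real.pi_pos]
        have p1 : Real.pi ^ 2 * (n * (n + 1)) ≤ 10 * ((n:ℝ) * (n + 1)) := by gcongr
        have p2 : Real.pi ^ 2 * (n * (3 * n + 1)) ≤ 10 * ((n:ℝ) * (3 * n + 1)) := by gcongr
        nlinarith

/-- reproduction -/
noncomputable def TRep (n : ℕ) (g : ℝ → ℂ) : Prop :=
  Continuous g ∧ ∀ x, ∫ t in (0:ℝ)..1, g t * Ker n (x - t) = g x

lemma TRep.add {n g h} (hg : TRep n g) (hh : TRep n h) : TRep n (fun x => g x + h x) := by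
  refine ⟨hg.1.add hh.1, fun x => ?_⟩
  have c : Continuous fun t => Ker n (x - t) := (Ker_cont n).comp (by fun_prop)
  have c1 : Continuous fun t => g t * Ker n (x - t) := hg.1.mul c
  have c2 : Continuous fun t => h t * Ker n (x - t) := hh.1.mul c
  simp_rw [add_mul]
  rw [intervalIntegral.integral_add (c1.intervalIntegrable _ _)
    (c2.intervalIntegrable _ _), hg.2, hh.2]

lemma TRep.const_mul {n g} (hg : TRep n g) (c : ℂ) : TRep n (fun x => c * g x) := by
  refine ⟨continuous_const.mul hg.1, fun x => ?_⟩
  simp_rw [mul_assoc]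
  rw [intervalIntegral.integral_const_mul, hg.2]

lemma TRep.sum {n} {ι : Type*} (s : Finset ι) (g : ι → ℝ → ℂ) (hg : ∀ i ∈ s, TRep n (g i)) :
    TRep n (fun x => ∑ i ∈ s, g i x) := by
  classical
  induction s using Finset.induction_on with
  | empty => exact ⟨by simpa using continuous_const, by simp⟩
  | insert a s ha ih =>
    simp_rw [Finset.sum_insert ha]
    exact (hg a (by simp)).add (ih fun i hi => hg i (by simp [hi]))

lemma TRep_ek (n : ℕ) (j : ℤ) (hj : |j| ≤ n) : TRep n (ek j) := by
  refine ⟨ek_cont j, fun x => ?_⟩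
  obtain ⟨hj1, hj2⟩ := abs_le.1 hj
  set B := Finset.Icc (-2 * n : ℤ) n with hB
  have : ∀ t, ek j t * Ker n (x - t) = ((n : ℂ) + 1)⁻¹ * ∑ a ∈ Finset.Icc 0 (n:ℤ), ∑ b ∈ B,
      ek (a + b) x * ek (j + -(a + b)) t := by
    intro t
    unfold Ker DS
    rw [Finset.sum_mul_sum, mul_left_comm, Finset.mul_sum]
    congr 1
    refine Finset.sum_congr rfl fun a _ => ?_
    rw [Finset.mul_sum]
    refine Finset.sum_congr rfl fun b _ => ?_
    rw [← ek_add, ek_sub_arg, ek_add j]; ring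
  simp_rw [this]
  have hi : ∀ k, ∫ t in (0:ℝ)..1, ek k t = if k = 0 then 1 else 0 := by
    intro k; have := ek_int k 0; simpa using this
  rw [intervalIntegral.integral_const_mul, intervalIntegral.integral_finsetSum]
  · have : ∀ a ∈ Finset.Icc 0 (n:ℤ), (∫ t in (0:ℝ)..1, ∑ b ∈ B, ek (a + b) x * ek (j + -(a + b)) t)
        = ek j x := by
      intro a ha
      rw [Finset.mem_Icc] at ha
      rw [intervalIntegral.integral_finsetSum]
      · simp_rw [intervalIntegral.integral_const_mul, hi]
        rw [Finset.sum_eq_single (j - a)]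
        · simp
        · intro b _ hb
          rw [if_neg (by omega)]; simp
        · intro h; exact absurd (by rw [hB, Finset.mem_Icc]; omega) h
      · intro b _
        exact (continuous_const.mul (ek_cont _)).intervalIntegrable _ _
    rw [Finset.sum_congr rfl this, Finset.sum_const]
    simp only [Int.card_Icc, nsmul_eq_mul]
    have h : ((n:ℤ) + 1 - 0).toNat = n + 1 := by omega
    rw [h]; push_cast
    have : (n:ℂ) + 1 ≠ 0 := by exact_mod_cast Nat.succ_ne_zero n
    field_simp
  · intro a _
    exact (continuous_finsetSum _ fun b _ => continuous_const.mul (ek_cont _)).intervalIntegrable _ _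

lemma TRep_cos (n j : ℕ) (hj : j ≤ n) : TRep n (fun x => (Real.cos (2 * Real.pi * j * x) : ℂ)) := by
  have h := ((TRep_ek n j (by rw [abs_le]; omega)).add (TRep_ek n (-j) (by rw [abs_le]; omega))).const_mul 2⁻¹
  convert h using 2 with x
  unfold ek
  push_cast
  rw [Complex.cos]
  rw [show (2 * Real.pi * j * x * Complex.I : ℂ) = 2 * Real.pi * Complex.I * j * x by ring,
    show (-(2 * Real.pi * j * x) * Complex.I : ℂ) = 2 * Real.pi * Complex.I * -j * x by ring]
  ring

lemma TRep_sin (n j : ℕ) (hj : j ≤ n) : TRep n (fun x => (Real.sin (2 * Real.pi * j * x) : ℂ)) := by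
  have h := (((TRep_ek n j (by rw [abs_le]; omega)).const_mul (-1)).add
    (TRep_ek n (-j) (by rw [abs_le]; omega))).const_mul (Complex.I / 2)
  convert h using 2 with x
  unfold ek
  push_cast
  rw [Complex.sin]
  rw [show (2 * Real.pi * j * x * Complex.I : ℂ) = 2 * Real.pi * Complex.I * j * x by ring,
    show (-(2 * Real.pi * j * x) * Complex.I : ℂ) = 2 * Real.pi * Complex.I * -j * x by ring]
  ring

lemma Ker_shift_int (n : ℕ) (x : ℝ) : ∫⁻ t in Icc (0:ℝ) 1, ‖Ker n (x - t)‖ₑ ≤ 2 := by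
  have c : Continuous fun t => Ker n (x - t) := (Ker_cont n).comp (by fun_prop)
  have h1 : ∫ t in (0:ℝ)..1, ‖Ker n (x - t)‖ ≤ 2 := by
    rw [intervalIntegral.integral_comp_sub_left (fun u => ‖Ker n u‖) x]
    have := Ker_int n (x - 1)
    simpa using this
  rw [intervalIntegral.integral_of_le zero_le_one, ← integral_Icc_eq_integral_Ioc] at h1
  have hi : IntegrableOn (fun t => Ker n (x - t)) (Icc 0 1) := c.continuousOn.integrableOn_Icc
  rw [← ofReal_integral_norm_eq_lintegral_enorm hi]
  calc _ ≤ ENNReal.ofReal 2 := ENNReal.ofReal_le_ofReal h1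
    _ = 2 := by simp

lemma Ker_diff_int (n : ℕ) (x x' : ℝ) :
    ∫⁻ t in Icc (0:ℝ) 1, ‖Ker n (x' - t) - Ker n (x - t)‖ₑ ≤ 300 := by
  have c : Continuous fun t => Ker n (x' - t) := (Ker_cont n).comp (by fun_prop)
  calc _ ≤ ∫⁻ t in Icc (0:ℝ) 1, (‖Ker n (x' - t)‖ₑ + ‖Ker n (x - t)‖ₑ) :=
        lintegral_mono fun t => enorm_sub_le
    _ = (∫⁻ t in Icc (0:ℝ) 1, ‖Ker n (x' - t)‖ₑ) + ∫⁻ t in Icc (0:ℝ) 1, ‖Ker n (x - t)‖ₑ :=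
        lintegral_add_left c.measurable.enorm _
    _ ≤ 2 + 2 := add_le_add (Ker_shift_int n x') (Ker_shift_int n x)
    _ ≤ 300 := by norm_num

lemma Ker_var (n : ℕ) (h1 : 1 ≤ n) (N : ℕ) (x : ℕ → ℝ) (hx : ∀ i < N, x i < x (i + 1))
    (hN : x N = x 0 + 1) (s : ℝ) :
    ∑ i ∈ Finset.range N, ‖Ker n (x (i + 1) - s) - Ker n (x i - s)‖ₑ ≤ 300 * n := by
  have c : Continuous fun t => Ker' n (t - s) := (Ker'_cont n).comp (by fun_prop)
  have hr : ∑ i ∈ Finset.range N, ‖Ker n (x (i + 1) - s) - Ker n (x i - s)‖ ≤ 300 * n := by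
    calc _ ≤ ∑ i ∈ Finset.range N, ∫ u in (x i)..(x (i+1)), ‖Ker' n (u - s)‖ := by
          refine Finset.sum_le_sum fun i hi => ?_
          rw [← intervalIntegral.integral_eq_sub_of_hasDerivAt
            (f := fun u => Ker n (u - s)) (f' := fun u => Ker' n (u - s))
            (fun u _ => (Ker_deriv n (u - s)).comp_sub_const u s) (c.intervalIntegrable _ _)]
          exact intervalIntegral.norm_integral_le_integral_norm (hx i (Finset.mem_range.1 hi)).le
      _ = ∫ u in (x 0)..(x N), ‖Ker' n (u - s)‖ :=
          intervalIntegral.sum_integral_adjacent_intervals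
            fun i _ => c.norm.intervalIntegrable _ _
      _ ≤ 300 * n := by
          rw [hN, intervalIntegral.integral_comp_sub_right (fun u => ‖Ker' n u‖) s]
          have := Ker'_int n h1 (x 0 - s)
          rwa [show x 0 + 1 - s = x 0 - s + 1 by ring]
  simp_rw [← ofReal_norm]
  rw [← ENNReal.ofReal_sum_of_nonneg fun i _ => norm_nonneg _]
  refine (ENNReal.ofReal_le_ofReal hr).trans ?_
  rw [ENNReal.ofReal_mul (by norm_num)]
  simp

lemma schur_aux {μ : Measure ℝ} (p : ℝ) (hp : 1 ≤ p) (f w : ℝ → ℝ≥0∞) (hf : Measurable f)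
    (hw : Measurable w) (C : ℝ≥0∞) (hC : ∫⁻ t, w t ∂μ ≤ C) :
    (∫⁻ t, f t * w t ∂μ) ^ p ≤ C ^ (p - 1) * ∫⁻ t, f t ^ p * w t ∂μ := by
  have hp0 : 0 < p := by linarith
  have hq : 0 ≤ 1 - 1 / p := by
    rw [sub_nonneg, div_le_one hp0]; exact hp
  have h := ENNReal.lintegral_mul_norm_pow_le (μ := μ) (f := fun t => f t ^ p * w t) (g := w)
    ((hf.pow_const p).mul hw).aemeasurable hw.aemeasurable
    (p := 1 / p) (q := 1 - 1 / p) (by positivity) hq (by ring)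
  have e : ∀ t, (f t ^ p * w t) ^ (1 / p) * w t ^ (1 - 1 / p) = f t * w t := by
    intro t
    rw [ENNReal.mul_rpow_of_nonneg _ _ (by positivity), ← ENNReal.rpow_mul,
      mul_one_div_cancel hp0.ne', ENNReal.rpow_one, mul_assoc,
      ← ENNReal.rpow_add_of_nonneg _ _ (by positivity) hq]
    simp
  simp_rw [e] at h
  calc _ ≤ ((∫⁻ t, f t ^ p * w t ∂μ) ^ (1 / p) * (∫⁻ t, w t ∂μ) ^ (1 - 1 / p)) ^ p := by
        gcongr
    _ = (∫⁻ t, w t ∂μ) ^ (p - 1) * ∫⁻ t, f t ^ p * w t ∂μ := by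
        rw [ENNReal.mul_rpow_of_nonneg _ _ hp0.le, ← ENNReal.rpow_mul, ← ENNReal.rpow_mul,
          one_div_mul_cancel hp0.ne', ENNReal.rpow_one, mul_comm,
          show (1 - 1 / p) * p = p - 1 by field_simp]
    _ ≤ _ := by
        gcongr

lemma TRep_diff {n g} (hg : TRep n g) (x x' : ℝ) :
    ‖g x' - g x‖ₑ ≤ ∫⁻ t in Icc (0:ℝ) 1, ‖g t‖ₑ * ‖Ker n (x' - t) - Ker n (x - t)‖ₑ := by
  have c : ∀ x, Continuous fun t => Ker n (x - t) := fun x => (Ker_cont n).comp (by fun_prop)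
  have c1 : ∀ x, Continuous fun t => g t * Ker n (x - t) := fun x => hg.1.mul (c x)
  rw [← hg.2 x, ← hg.2 x', ← intervalIntegral.integral_sub
    ((c1 _).intervalIntegrable _ _) ((c1 _).intervalIntegrable _ _),
    intervalIntegral.integral_of_le zero_le_one, ← integral_Icc_eq_integral_Ioc]
  refine (enorm_integral_le_lintegral_enorm _).trans (le_of_eq ?_)
  refine lintegral_congr fun t => ?_
  rw [← enorm_mul, mul_sub]

lemma oned {n g} (hg : TRep n g) (hn : 1 ≤ n) (p : ℝ) (hp : 1 ≤ p) (N : ℕ) (x : ℕ → ℝ)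
    (hx : ∀ i < N, x i < x (i + 1)) (hN : x N = x 0 + 1) :
    ∑ i ∈ Finset.range N, ‖g (x (i + 1)) - g (x i)‖ₑ ^ p
      ≤ 300 ^ p * n * ∫⁻ t in Icc (0:ℝ) 1, ‖g t‖ₑ ^ p := by
  have c : ∀ x, Continuous fun t => Ker n (x - t) := fun x => (Ker_cont n).comp (by fun_prop)
  have m : ∀ x x', Measurable fun t => ‖Ker n (x' - t) - Ker n (x - t)‖ₑ :=
    fun x x' => ((c x').sub (c x)).measurable.enorm
  have mg : Measurable fun t => ‖g t‖ₑ := hg.1.measurable.enorm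
  calc _ ≤ ∑ i ∈ Finset.range N, 300 ^ (p - 1) * ∫⁻ t in Icc (0:ℝ) 1,
            ‖g t‖ₑ ^ p * ‖Ker n (x (i + 1) - t) - Ker n (x i - t)‖ₑ := by
        refine Finset.sum_le_sum fun i _ => ?_
        refine (ENNReal.rpow_le_rpow (TRep_diff hg (x i) (x (i+1))) (by linarith)).trans ?_
        exact schur_aux p hp _ _ mg (m _ _) 300 (Ker_diff_int n _ _)
    _ = 300 ^ (p - 1) * ∫⁻ t in Icc (0:ℝ) 1, ‖g t‖ₑ ^ p *
          ∑ i ∈ Finset.range N, ‖Ker n (x (i + 1) - t) - Ker n (x i - t)‖ₑ := by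
        have mm : ∀ i, Measurable fun t =>
            ‖g t‖ₑ ^ p * ‖Ker n (x (i + 1) - t) - Ker n (x i - t)‖ₑ :=
          fun i => (mg.pow_const p).mul (m _ _)
        rw [← Finset.mul_sum, ← lintegral_finsetSum _ fun i _ => mm i]
        simp_rw [Finset.mul_sum]
    _ ≤ 300 ^ (p - 1) * ∫⁻ t in Icc (0:ℝ) 1, ‖g t‖ₑ ^ p * (300 * n) := by
        gcongr with t
        exact Ker_var n hn N x hx hN t
    _ = 300 ^ p * n * ∫⁻ t in Icc (0:ℝ) 1, ‖g t‖ₑ ^ p := by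
        rw [lintegral_mul_const _ (mg.pow_const p)]
        have : (300:ℝ≥0∞) ^ p = 300 ^ (p - 1) * 300 := by
          nth_rewrite 3 [← ENNReal.rpow_one 300]
          rw [← ENNReal.rpow_add _ _ (by norm_num) (by norm_num)]; congr 1; ring
        rw [this]; ring

lemma twod (T : ℝ → ℝ → ℝ) (n m : ℕ) (hn : 1 ≤ n) (hm : 1 ≤ m)
    (hc : Continuous (Function.uncurry T))
    (h1 : ∀ y, TRep n (fun s => (T s y : ℂ))) (h2 : ∀ s, TRep m (fun y => (T s y : ℂ)))
    (p : ℝ) (hp : 1 ≤ p) (M N : ℕ) (x y : ℕ → ℝ)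
    (hx : ∀ i < M, x i < x (i + 1)) (hM : x M = x 0 + 1)
    (hy : ∀ i < N, y i < y (i + 1)) (hN : y N = y 0 + 1) :
    ∑ i ∈ Finset.range M, ∑ j ∈ Finset.range N,
      ‖T (x (i + 1)) (y (j + 1)) - T (x (i + 1)) (y j)
        - T (x i) (y (j + 1)) + T (x i) (y j)‖ₑ ^ p
      ≤ (300 ^ p * n) * ((300 ^ p * m) * ∫⁻ s in Icc (0:ℝ) 1, ∫⁻ t in Icc (0:ℝ) 1, ‖T s t‖ₑ ^ p) := by
  have en : ∀ r : ℝ, ‖(r : ℂ)‖ₑ = ‖r‖ₑ := fun r => by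
    rw [← ofReal_norm, ← ofReal_norm, Complex.norm_real]
  have hG : ∀ j, TRep n (fun s => (T s (y (j + 1)) : ℂ) + (-1) * (T s (y j) : ℂ)) :=
    fun j => (h1 _).add ((h1 _).const_mul (-1))
  have mt : ∀ j, Measurable fun s => ‖T s (y (j + 1)) - T s (y j)‖ₑ ^ p := by
    intro j
    have c : ∀ v, Continuous fun s => T s v := fun v =>
      hc.comp (continuous_id.prodMk continuous_const)
    exact (((c _).sub (c _)).measurable.enorm).pow_const p
  rw [Finset.sum_comm]
  calc _ ≤ ∑ j ∈ Finset.range N, 300 ^ p * n *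
          ∫⁻ s in Icc (0:ℝ) 1, ‖T s (y (j + 1)) - T s (y j)‖ₑ ^ p := by
        refine Finset.sum_le_sum fun j _ => ?_
        have := oned (hG j) hn p hp M x hx hM
        have e1 : ∀ u v : ℝ, ‖(u : ℂ) + (-1) * (v : ℂ)‖ₑ = ‖u - v‖ₑ := fun u v => by
          rw [← en]; congr 1; push_cast; ring
        have e2 : ∀ u v w z : ℝ, ‖(u : ℂ) + (-1) * (v : ℂ) - ((w : ℂ) + (-1) * (z : ℂ))‖ₑ
            = ‖u - v - w + z‖ₑ := fun u v w z => by
          rw [← en]; congr 1; push_cast; ring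
        simp only [e1, e2] at this
        exact this
    _ = 300 ^ p * n * ∫⁻ s in Icc (0:ℝ) 1, ∑ j ∈ Finset.range N,
          ‖T s (y (j + 1)) - T s (y j)‖ₑ ^ p := by
        rw [← Finset.mul_sum, ← lintegral_finsetSum _ fun j _ => mt j]
    _ ≤ 300 ^ p * n * ∫⁻ s in Icc (0:ℝ) 1, (300 ^ p * m * ∫⁻ t in Icc (0:ℝ) 1, ‖T s t‖ₑ ^ p) := by
        gcongr with s
        have := oned (h2 s) hm p hp N y hy hN
        simpa only [← Complex.ofReal_sub, en] using this
    _ = _ := by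
        rw [lintegral_const_mul' _ _ (ENNReal.mul_ne_top
          (ENNReal.rpow_ne_top_of_nonneg (by linarith) (by norm_num)) (by simp))]

lemma trig_facts (n m : ℕ) (T : ℝ → ℝ → ℝ) (hT : IsTrigPoly2 n m T) :
    Continuous (Function.uncurry T) ∧ (∀ y, TRep n (fun s => (T s y : ℂ))) ∧
      (∀ s, TRep m (fun y => (T s y : ℂ))) := by
  obtain ⟨a, b, c, d, h⟩ := hT
  refine ⟨?_, fun y => ?_, fun s => ?_⟩
  · have : Function.uncurry T = fun z : ℝ × ℝ => T z.1 z.2 := rfl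
    rw [this]
    simp_rw [h]
    fun_prop
  · simp_rw [h]
    push_cast
    refine TRep.sum _ _ fun j hj => TRep.sum _ _ fun k hk => ?_
    have hj' : j ≤ n := by rw [Finset.mem_range] at hj; omega
    have hc := TRep_cos n j hj'
    have hs := TRep_sin n j hj'
    have := (hc.const_mul (a j k * Real.cos (2 * Real.pi * k * y) + b j k * Real.sin (2 * Real.pi * k * y))).add
      (hs.const_mul (c j k * Real.cos (2 * Real.pi * k * y) + d j k * Real.sin (2 * Real.pi * k * y)))
    convert this using 2 with x
    push_cast; ring
  · simp_rw [h]
    push_cast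
    refine TRep.sum _ _ fun j hj => TRep.sum _ _ fun k hk => ?_
    have hk' : k ≤ m := by rw [Finset.mem_range] at hk; omega
    have hc := TRep_cos m k hk'
    have hs := TRep_sin m k hk'
    have := (hc.const_mul (a j k * Real.cos (2 * Real.pi * j * s) + c j k * Real.sin (2 * Real.pi * j * s))).add
      (hs.const_mul (b j k * Real.cos (2 * Real.pi * j * s) + d j k * Real.sin (2 * Real.pi * j * s)))
    convert this using 2 with x
    push_cast; ring

/-- **Oskolkov's inequality.** There is an absolute constant `A > 0` such
that `v_p⁽²⁾(T) ≤ A (nm)^{1/p} ‖T‖_p` for every `1 ≤ p < ∞` and every trigonometric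
polynomial `T` of degree `(n,m)`. -/
theorem statement13 :
    ∃ A : ℝ, 0 < A ∧
      ∀ (p : ℝ), 1 ≤ p → ∀ (n m : ℕ), 1 ≤ n → 1 ≤ m → ∀ T : ℝ → ℝ → ℝ,
        IsTrigPoly2 n m T →
          vp2 p T ≤ ENNReal.ofReal (A * ((n : ℝ) * m) ^ (1 / p)) * lpNorm2 p T := by
  refine ⟨90000, by norm_num, fun p hp n m hn hm T hT => ?_⟩
  obtain ⟨hc, h1, h2⟩ := trig_facts n m T hT
  have hp0 : 0 < p := by linarith
  unfold vp2
  refine iSup_le fun M => iSup_le fun N => iSup_le fun x => iSup_le fun y => iSup_le fun hx =>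
    iSup_le fun hM => iSup_le fun hy => iSup_le fun hN => ?_
  have key := twod T n m hn hm hc h1 h2 p hp M N x y hx hM hy hN
  have en : ∀ r : ℝ, ‖r‖ₑ ^ p = ENNReal.ofReal (|r| ^ p) := by
    intro r
    rw [← ENNReal.ofReal_rpow_of_nonneg (abs_nonneg r) hp0.le, ← Real.norm_eq_abs, ofReal_norm]
  simp_rw [en] at key
  have hs : ∀ i, ∑ j ∈ Finset.range N, ENNReal.ofReal (|T (x (i + 1)) (y (j + 1))
      - T (x (i + 1)) (y j) - T (x i) (y (j + 1)) + T (x i) (y j)| ^ p)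
      = ENNReal.ofReal (∑ j ∈ Finset.range N, |T (x (i + 1)) (y (j + 1))
      - T (x (i + 1)) (y j) - T (x i) (y (j + 1)) + T (x i) (y j)| ^ p) := fun i =>
    (ENNReal.ofReal_sum_of_nonneg fun j _ => by positivity).symm
  simp_rw [hs] at key
  rw [← ENNReal.ofReal_sum_of_nonneg
    (fun i _ => Finset.sum_nonneg fun j _ => by positivity)] at key
  rw [← ENNReal.ofReal_rpow_of_nonneg
    (Finset.sum_nonneg fun i _ => Finset.sum_nonneg fun j _ => by positivity) (by positivity)]
  refine (ENNReal.rpow_le_rpow key (by positivity)).trans (le_of_eq ?_)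
  unfold lpNorm2
  have hq : 0 ≤ 1 / p := by positivity
  rw [ENNReal.ofReal_mul (by norm_num), ← ENNReal.ofReal_rpow_of_nonneg (by positivity) hq,
    ENNReal.ofReal_mul (by positivity), ENNReal.ofReal_natCast, ENNReal.ofReal_natCast]
  simp only [ENNReal.mul_rpow_of_nonneg _ _ hq]
  rw [← ENNReal.rpow_mul, mul_one_div_cancel hp0.ne', ENNReal.rpow_one]
  have h9 : ENNReal.ofReal 90000 = 300 * 300 := by
    rw [show (90000:ℝ) = 300 * 300 by norm_num, ENNReal.ofReal_mul (by norm_num)]; norm_num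
  rw [h9]
  ring
end

section
/- Let 1 < p < ∞, n,m ∈ ℕ, and let T be a trigonometric polynomial of degree (n,m) in two variables. Then K_p(T) ≤ 12π²·p·p'·(nm)^{1/p}·‖T‖_p and I_p(T) ≤ 8π²·(p·p')²·(nm)^{1/p}·‖T‖_p, where p' = p/(p−1). -/
open MeasureTheory Filter Set
open scoped ENNReal

lemma alt_sum (n : ℕ) (j : ℕ) (hj : j < n) :
    ∑ k ∈ Finset.range (2*n), (-1:ℝ)^k * Real.sin (j * ((2*k+1)*Real.pi/(2*n))) = 0 := by
  have hn : (0:ℝ) < n := by exact_mod_cast (by omega : 0 < n)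
  have hc : 0 < Real.cos (j * (Real.pi/(2*n))) := by
    apply Real.cos_pos_of_mem_Ioo
    have hjn : (j:ℝ) < n := by exact_mod_cast hj
    have hpi := Real.pi_pos
    constructor
    · have : 0 ≤ (j:ℝ) * (Real.pi/(2*n)) := by positivity
      linarith
    · calc (j:ℝ) * (Real.pi/(2*n)) < n * (Real.pi/(2*n)) := by gcongr
        _ = Real.pi/2 := by field_simp
  have key : ∀ N : ℕ, (∑ k ∈ Finset.range N, (-1:ℝ)^k * Real.sin (j * ((2*k+1)*Real.pi/(2*n))))
      * (2 * Real.cos (j * (Real.pi/(2*n)))) = - (-1:ℝ)^N * Real.sin (N * (2 * (j * (Real.pi/(2*n))))) := by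
    intro N
    induction N with
    | zero => simp
    | succ N ih =>
      rw [Finset.sum_range_succ, add_mul, ih]
      have h1 : ((N+1:ℕ):ℝ) * (2 * (j * (Real.pi/(2*n)))) = (j * ((2*N+1)*Real.pi/(2*n))) + (j * (Real.pi/(2*n))) := by
        push_cast; ring
      have h2 : (N:ℝ) * (2 * (j * (Real.pi/(2*n)))) = (j * ((2*N+1)*Real.pi/(2*n))) - (j * (Real.pi/(2*n))) := by
        ring
      rw [h1, h2, Real.sin_add, Real.sin_sub, pow_succ]; ring
  have h := key (2*n)
  have h3 : ((2*n:ℕ):ℝ) * (2 * (j * (Real.pi/(2*n)))) = j * (2 * Real.pi) := by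
    push_cast; field_simp
  have h4 : Real.sin (j * (2 * Real.pi)) = 0 := by
    have := Real.sin_nat_mul_pi (2*j)
    push_cast at this
    rw [← this]; ring_nf
  rw [h3, h4, mul_zero] at h
  rcases mul_eq_zero.1 h with h | h
  · exact h
  · linarith

lemma riesz (n : ℕ) (hn : 1 ≤ n) (a : ℝ) (ha : 0 < a) (ha' : a < Real.pi/(2*n)) :
    ∃ w : ℕ → ℝ, (∑ k ∈ Finset.range (2*n), |w k| ≤ n * a) ∧
      ∀ j ≤ n, (∑ k ∈ Finset.range (2*n), w k * Real.cos (j * ((2*k+1)*Real.pi/(2*n))) = 0) ∧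
       (∑ k ∈ Finset.range (2*n), w k * Real.sin (j * ((2*k+1)*Real.pi/(2*n))) = Real.sin (j * a)) := by
  have hn0 : (1:ℝ) ≤ n := by exact_mod_cast hn
  have hpi := Real.pi_pos
  set t : ℕ → ℝ := fun k => (2*k+1)*Real.pi/(2*n) with ht
  have hna : n * a < Real.pi/2 := by
    calc n * a < n * (Real.pi/(2*n)) := by gcongr
      _ = Real.pi/2 := by field_simp
  have hna0 : 0 < n * a := by positivity
  have hasmall : a < Real.pi/2 := by nlinarith
  have hsina : 0 < Real.sin a := Real.sin_pos_of_pos_of_lt_pi ha (by linarith)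
  have hcosna : 0 < Real.cos (n*a) := Real.cos_pos_of_mem_Ioo ⟨by linarith, hna⟩
  set c : ℝ := Real.cos (n*a) * Real.sin a / (2*n) with hc
  have hc0 : 0 < c := by positivity
  have hd : ∀ k ∈ Finset.range (2*n), 0 < Real.cos a - Real.cos (t k) := by
    intro k hk
    have hk' : (k:ℝ) + 1 ≤ 2*n := by exact_mod_cast Finset.mem_range.1 hk
    have e1 : Real.pi/(2*n) ≤ t k := by
      simp only [ht]; gcongr
      have : (0:ℝ) ≤ k := by positivity
      nlinarith
    have e2 : t k ≤ 2 * Real.pi - Real.pi/(2*n) := by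
      have : 2 * Real.pi - Real.pi/(2*n) = (4*n-1)*Real.pi/(2*n) := by field_simp; ring
      rw [this]; simp only [ht]; gcongr
      linarith
    rw [Real.cos_sub_cos]
    have s1 : 0 < Real.sin ((a + t k)/2) := Real.sin_pos_of_pos_of_lt_pi (by linarith) (by linarith)
    have s2 : 0 < Real.sin ((t k - a)/2) := Real.sin_pos_of_pos_of_lt_pi (by linarith) (by linarith)
    have : Real.sin ((a - t k)/2) = - Real.sin ((t k - a)/2) := by
      rw [← Real.sin_neg]; ring_nf
    rw [this]
    nlinarith [mul_pos s1 s2]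
  set v : ℕ → ℝ := fun k => c / (Real.cos a - Real.cos (t k)) with hv
  have hv0 : ∀ k ∈ Finset.range (2*n), 0 < v k := fun k hk => div_pos hc0 (hd k hk)
  have hvd : ∀ k ∈ Finset.range (2*n), v k * (Real.cos a - Real.cos (t k)) = c := fun k hk =>
    div_mul_cancel₀ _ (hd k hk).ne'
  -- values at n
  have hnt : ∀ k : ℕ, (n:ℝ) * t k = k * Real.pi + Real.pi/2 := by
    intro k; simp only [ht]; field_simp
  have hsn : ∀ k : ℕ, Real.sin (n * t k) = (-1)^k := by
    intro k; rw [hnt, Real.sin_add_pi_div_two, Real.cos_nat_mul_pi]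
  have hcn : ∀ k : ℕ, Real.cos (n * t k) = 0 := by
    intro k; rw [hnt, Real.cos_add_pi_div_two, Real.sin_nat_mul_pi, neg_zero]
  have hsq : ∀ k : ℕ, ((-1:ℝ)^k) * (-1)^k = 1 := by
    intro k; rw [← mul_pow]; simp
  set U : ℕ → ℝ := fun j => ∑ k ∈ Finset.range (2*n), (v k * (-1)^k) * Real.sin (j * t k) with hU
  have hU0 : U 0 = 0 := by simp [hU]
  have hrec : ∀ j, j + 1 < n → U (j+2) = 2 * Real.cos a * U (j+1) - U j := by
    intro j hj
    have h0 := alt_sum n (j+1) hj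
    have : U (j+2) + U j - 2 * Real.cos a * U (j+1) = -(2 * c) * ∑ k ∈ Finset.range (2*n), (-1:ℝ)^k * Real.sin ((j+1:ℕ) * t k) := by
      simp only [hU, Finset.mul_sum]
      rw [← Finset.sum_add_distrib, ← Finset.sum_sub_distrib]
      apply Finset.sum_congr rfl
      intro k hk
      have e1 : ((j+2:ℕ):ℝ) * t k = (j+1:ℕ) * t k + t k := by push_cast; ring
      have e2 : ((j:ℕ):ℝ) * t k = (j+1:ℕ) * t k - t k := by push_cast; ring
      rw [e1, e2, Real.sin_add, Real.sin_sub, ← hvd k hk]; ring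
    rw [h0] at this
    linarith
  have hUC : ∀ j, j + 1 ≤ n → U j = U 1 / Real.sin a * Real.sin (j*a) ∧ U (j+1) = U 1 / Real.sin a * Real.sin ((j+1:ℕ)*a) := by
    intro j
    induction j with
    | zero => intro _; simp [hU0, hsina.ne']
    | succ j ih =>
      intro hj
      obtain ⟨i1, i2⟩ := ih (by omega)
      refine ⟨i2, ?_⟩
      rw [hrec j (by omega), i1, i2]
      have e1 : ((j+1+1:ℕ):ℝ) * a = (j+1:ℕ) * a + a := by push_cast; ring
      have e2 : ((j:ℕ):ℝ) * a = (j+1:ℕ) * a - a := by push_cast; ring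
      rw [e1, e2, Real.sin_add, Real.sin_sub]; ring
  have hUn : U n = ∑ k ∈ Finset.range (2*n), v k := by
    apply Finset.sum_congr rfl; intro k _; rw [hsn, mul_assoc, hsq, mul_one]
  have hUn1 : U (n-1) - Real.cos a * U n = - (2*n*c) := by
    have : ((2:ℝ)*n*c) = ∑ k ∈ Finset.range (2*n), c := by simp
    rw [this, hUn, Finset.mul_sum, ← Finset.sum_sub_distrib, ← Finset.sum_neg_distrib]
    apply Finset.sum_congr rfl
    intro k hk
    have e : ((n-1:ℕ):ℝ) * t k = n * t k - t k := by push_cast [hn]; ring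
    rw [e, Real.sin_sub, hsn, hcn, ← hvd k hk]
    linear_combination (v k * Real.cos (t k)) * hsq k
  have hC : U 1 / Real.sin a = 1 := by
    obtain ⟨i1, i2⟩ := hUC (n-1) (by omega)
    rw [Nat.sub_add_cancel hn] at i2
    have e : ((n-1:ℕ):ℝ) * a = n * a - a := by push_cast [hn]; ring
    rw [i1, i2, e, Real.sin_sub] at hUn1
    have e2 : 2 * n * c = Real.cos (n*a) * Real.sin a := by rw [hc]; field_simp
    rw [e2] at hUn1
    have : (U 1 / Real.sin a - 1) * (Real.cos (n*a) * Real.sin a) = 0 := by linarith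
    rcases mul_eq_zero.1 this with h | h
    · linarith
    · exact absurd h (by positivity)
  have hUall : ∀ j ≤ n, U j = Real.sin (j*a) := by
    intro j hj
    rcases Nat.eq_zero_or_pos j with h | h
    · subst h; simp [hU0]
    · have := (hUC (j-1) (by omega)).2
      rw [Nat.sub_add_cancel h, hC, one_mul] at this
      exact this
  refine ⟨fun k => v k * (-1)^k, ?_, fun j hj => ⟨?_, hUall j hj⟩⟩
  · calc ∑ k ∈ Finset.range (2*n), |v k * (-1)^k| = ∑ k ∈ Finset.range (2*n), v k := by
          apply Finset.sum_congr rfl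
          intro k hk
          rw [abs_mul, abs_pow, abs_neg, abs_one, one_pow, mul_one, abs_of_pos (hv0 k hk)]
      _ = Real.sin (n*a) := by rw [← hUn, hUall n le_rfl]
      _ ≤ n * a := Real.sin_le hna0.le
  · have h := Finset.sum_range_reflect (fun k => v k * (-1)^k * Real.cos (j * t k)) (2*n)
    have h2 : ∑ k ∈ Finset.range (2*n), (fun k => v k * (-1)^k * Real.cos (j * t k)) (2*n-1-k)
        = - ∑ k ∈ Finset.range (2*n), v k * (-1)^k * Real.cos (j * t k) := by
      rw [← Finset.sum_neg_distrib]
      apply Finset.sum_congr rfl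
      intro k hk
      have hk' := Finset.mem_range.1 hk
      have et : t (2*n-1-k) = 2 * Real.pi - t k := by
        simp only [ht]
        rw [Nat.sub_sub, Nat.cast_sub (by omega)]; push_cast; field_simp; ring
      have ev : v (2*n-1-k) = v k := by
        simp only [hv, et, Real.cos_two_pi_sub]
      have ec : Real.cos (j * t (2*n-1-k)) = Real.cos (j * t k) := by
        rw [et, mul_sub, Real.cos_nat_mul_two_pi_sub]
      have es : (-1:ℝ)^(2*n-1-k) = - (-1)^k := by
        have h1 : (-1:ℝ)^(2*n-1-k) * (-1)^k = -1 := by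
          rw [← pow_add, show 2*n-1-k+k = 2*(n-1)+1 by omega, pow_succ, pow_mul]; simp
        linear_combination (-1:ℝ)^k * h1 - (-1:ℝ)^(2*n-1-k) * hsq k
      simp only [ev, ec, es]; ring
    rw [h2] at h
    linarith

lemma periodic_lintegral (g : ℝ → ℝ≥0∞) (hg : ∀ x, g (x + 1) = g x) (h : ℝ) :
    ∫⁻ x in Set.Icc (0:ℝ) 1, g (x + h) = ∫⁻ x in Set.Icc (0:ℝ) 1, g x := by
  have hp : Function.Periodic g 1 := hg
  rw [← Measure.restrict_congr_set (Ioc_ae_eq_Icc (a := (0:ℝ)) (b := 1))]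
  have e1 : ∫⁻ x in Set.Ioc (0:ℝ) 1, g (x + h) = ∫⁻ x in Set.Ioc h (h+1), g x := by
    rw [← (measurePreserving_add_right volume h).setLIntegral_comp_preimage_emb
      (measurableEmbedding_addRight h) g (Set.Ioc h (h+1))]
    congr 2
    simp
  rw [e1]
  have := (isAddFundamentalDomain_Ioc one_pos h volume).setLIntegral_eq
    (isAddFundamentalDomain_Ioc one_pos 0 volume) g (by
      rintro ⟨z, hz⟩ x
      obtain ⟨k, rfl⟩ := AddSubgroup.mem_zmultiples_iff.1 hz
      change g (k • (1:ℝ) + x) = g x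
      rw [add_comm]
      exact hp.zsmul k x)
  rw [this, zero_add]

lemma lpNorm2_shift (p : ℝ) (f : ℝ → ℝ → ℝ) (hf : BiPeriodic f) (h : ℝ) :
    lpNorm2 p (fun x y => f (x + h) y) = lpNorm2 p f := by
  unfold lpNorm2
  congr 1
  exact periodic_lintegral (fun x => ∫⁻ y in Set.Icc (0:ℝ) 1, ENNReal.ofReal (|f x y| ^ p))
    (fun x => by simp only [hf.1]) h

lemma lpNorm2_eq (p : ℝ) (hp : 1 < p) (f : ℝ → ℝ → ℝ) (hf : Continuous (Function.uncurry f)) :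
    lpNorm2 p f = eLpNorm (Function.uncurry f) (ENNReal.ofReal p)
      ((volume.restrict (Set.Icc (0:ℝ) 1)).prod (volume.restrict (Set.Icc (0:ℝ) 1))) := by
  have hp0 : 0 < p := by linarith
  rw [eLpNorm_eq_lintegral_rpow_enorm_toReal (by simpa using hp0) ENNReal.ofReal_ne_top,
    ENNReal.toReal_ofReal hp0.le, lintegral_prod]
  · unfold lpNorm2
    congr 1
    refine lintegral_congr fun x => lintegral_congr fun y => ?_
    rw [← ENNReal.ofReal_rpow_of_nonneg (abs_nonneg _) hp0.le, Function.uncurry_apply_pair,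
      Real.enorm_eq_ofReal_abs]
  · exact (hf.measurable.enorm.pow_const p).aemeasurable

lemma lpNorm2_flip (p : ℝ) (f : ℝ → ℝ → ℝ) (hf : Continuous (Function.uncurry f)) :
    lpNorm2 p (fun x y => f y x) = lpNorm2 p f := by
  unfold lpNorm2
  congr 1
  refine lintegral_lintegral_swap (f := fun x y => ENNReal.ofReal (|f y x| ^ p)) ?_
  refine Measurable.aemeasurable ?_
  have : Measurable (fun z : ℝ × ℝ => f z.2 z.1) := (hf.comp continuous_swap).measurable
  exact (this.abs.pow_const p).ennreal_ofReal

lemma lpNorm2_comb (p : ℝ) (hp : 1 < p) (f : ℝ → ℝ → ℝ) (hf : Continuous (Function.uncurry f))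
    (hper : BiPeriodic f) (N : ℕ) (c h : ℕ → ℝ) :
    lpNorm2 p (fun x y => ∑ k ∈ Finset.range N, c k * f (x + h k) y) ≤
      ENNReal.ofReal (∑ k ∈ Finset.range N, |c k|) * lpNorm2 p f := by
  have hc : ∀ k, Continuous (Function.uncurry (fun x y => f (x + h k) y)) := by
    intro k
    exact hf.comp (f := fun z : ℝ × ℝ => (z.1 + h k, z.2)) (by fun_prop)
  have hc2 : ∀ k, Continuous (fun z : ℝ × ℝ => f (z.1 + h k) z.2) := hc
  rw [lpNorm2_eq p hp _ (by
    simp only [Function.uncurry_def]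
    exact continuous_finsetSum _ fun k _ => continuous_const.mul (hc2 k))]
  have e : Function.uncurry (fun x y => ∑ k ∈ Finset.range N, c k * f (x + h k) y)
      = ∑ k ∈ Finset.range N, c k • Function.uncurry (fun x y => f (x + h k) y) := by
    ext z; simp [Function.uncurry]
  rw [e]
  refine (eLpNorm_sum_le (fun k _ => ((hc k).const_smul (c k)).aestronglyMeasurable)
    (by simpa using hp.le)).trans ?_
  rw [ENNReal.ofReal_sum_of_nonneg (fun _ _ => abs_nonneg _), Finset.sum_mul]
  refine Finset.sum_le_sum fun k _ => ?_
  rw [eLpNorm_const_smul, ← lpNorm2_eq p hp _ (hc k), lpNorm2_shift p f hper,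
    Real.enorm_eq_ofReal_abs]

/-- trigonometric polynomial of degree n in x for each fixed y -/
def XDeg (n : ℕ) (f : ℝ → ℝ → ℝ) : Prop :=
  ∀ y, ∃ a b : ℕ → ℝ, ∀ x, f x y = ∑ j ∈ Finset.range (n+1),
    (a j * Real.cos (2 * Real.pi * j * x) + b j * Real.sin (2 * Real.pi * j * x))

lemma diff_bound (p : ℝ) (hp : 1 < p) (n : ℕ) (hn : 1 ≤ n) (f : ℝ → ℝ → ℝ)
    (hf : Continuous (Function.uncurry f))
    (hper : BiPeriodic f) (hd : XDeg n f) (s : ℝ) (hs : 0 ≤ s) :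
    lpNorm2 p (fun x y => f (x + s) y - f x y) ≤
      ENNReal.ofReal (min 2 (2 * Real.pi * n * s)) * lpNorm2 p f := by
  have hpi := Real.pi_pos
  have hpi3 := Real.pi_gt_three
  have hn0 : (1:ℝ) ≤ n := by exact_mod_cast hn
  have htriv : lpNorm2 p (fun x y => f (x + s) y - f x y) ≤ ENNReal.ofReal 2 * lpNorm2 p f := by
    have := lpNorm2_comb p hp f hf hper 2 (fun k => if k = 0 then 1 else -1)
      (fun k => if k = 0 then s else 0)
    simp [Finset.sum_range_succ] at this
    simp only [sub_eq_add_neg]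
    refine this.trans (le_of_eq ?_)
    norm_num
  rcases hs.eq_or_lt with rfl | hs
  · have hp0 : 0 < p := by linarith
    simp [lpNorm2, hp0.ne', hp0]
  rcases le_or_gt (1 / (2 * (n:ℝ))) s with h | h
  · rwa [min_eq_left]
    have : 1 / 2 ≤ n * s := by
      calc (1:ℝ)/2 = n * (1 / (2 * (n:ℝ))) := by field_simp
        _ ≤ n * s := by gcongr
    nlinarith
  · obtain ⟨w, hw, hW⟩ := riesz n hn (Real.pi * s) (by positivity) (by
      calc Real.pi * s < Real.pi * (1 / (2 * (n:ℝ))) := by gcongr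
        _ = _ := by ring)
    have hle : 2 * Real.pi * n * s ≤ 2 ∨ 2 ≤ 2 * Real.pi * n * s := le_total _ _
    rcases hle with hle | hle
    swap
    · rwa [min_eq_left hle]
    rw [min_eq_right hle]
    have heq : (fun x y => f (x + s) y - f x y) = fun x y => ∑ k ∈ Finset.range (2*n),
        (-2 * w k) * f (x + (s/2 - (2*k+1)/(4*n))) y := by
      ext x y
      obtain ⟨a, b, hab⟩ := hd y
      simp only [hab, Finset.mul_sum]
      rw [Finset.sum_comm, ← Finset.sum_sub_distrib]
      refine Finset.sum_congr rfl fun j hj => ?_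
      obtain ⟨h1, h2⟩ := hW j (by simpa [Nat.lt_succ_iff] using hj)
      set θ : ℝ := 2 * Real.pi * j * (x + s/2) with hθ
      have e1 : 2 * Real.pi * j * (x + s) = θ + j * (Real.pi * s) := by rw [hθ]; ring
      have e2 : 2 * Real.pi * j * x = θ - j * (Real.pi * s) := by rw [hθ]; ring
      have e3 : ∀ k : ℕ, 2 * Real.pi * j * (x + (s/2 - (2*k+1)/(4*n))) =
          θ - j * ((2*k+1)*Real.pi/(2*n)) := by
        intro k; rw [hθ]; field_simp; ring
      have e4 : ∀ k : ℕ, -2 * w k * (a j * Real.cos (2 * Real.pi * j * (x + (s/2 - (2*k+1)/(4*n))))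
          + b j * Real.sin (2 * Real.pi * j * (x + (s/2 - (2*k+1)/(4*n))))) =
          (-2 * (a j * Real.cos θ + b j * Real.sin θ)) *
            (w k * Real.cos (j * ((2*k+1)*Real.pi/(2*n)))) +
          (-2 * (a j * Real.sin θ - b j * Real.cos θ)) *
            (w k * Real.sin (j * ((2*k+1)*Real.pi/(2*n)))) := by
        intro k; rw [e3, Real.cos_sub, Real.sin_sub]; ring
      simp only [e4]
      rw [Finset.sum_add_distrib, ← Finset.mul_sum, ← Finset.mul_sum, h1, h2, e1, e2,
        Real.cos_add, Real.cos_sub, Real.sin_add, Real.sin_sub]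
      ring
    rw [heq]
    refine (lpNorm2_comb p hp f hf hper (2*n) (fun k => -2 * w k)
      (fun k => s/2 - (2*k+1)/(4*n))).trans ?_
    gcongr
    simp only [abs_mul, abs_neg, Nat.abs_ofNat]
    rw [← Finset.mul_sum]
    nlinarith

lemma mixed_bound (p : ℝ) (hp : 1 < p) (n m : ℕ) (hn : 1 ≤ n) (hm : 1 ≤ m) (T : ℝ → ℝ → ℝ)
    (hT : IsTrigPoly2 n m T) (u v : ℝ) (hu : 0 ≤ u) :
    mixedModulus p T u v ≤ ENNReal.ofReal (min 2 (2 * Real.pi * n * u)) *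
      (ENNReal.ofReal (min 2 (2 * Real.pi * m * v)) * lpNorm2 p T) := by
  obtain ⟨a, b, c, d, h⟩ := hT
  have hpi := Real.pi_pos
  have hcont : Continuous (Function.uncurry T) := by
    have : Function.uncurry T = fun z : ℝ × ℝ => _ := funext fun z => h z.1 z.2
    rw [this]
    fun_prop
  have hper : BiPeriodic T := by
    constructor
    · intro x y
      have e1 : ∀ j : ℕ, 2 * Real.pi * j * (x + 1) = 2 * Real.pi * j * x + j * (2 * Real.pi) := by
        intro j; ring
      simp only [h, e1, Real.cos_add_nat_mul_two_pi, Real.sin_add_nat_mul_two_pi]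
    · intro x y
      have e1 : ∀ j : ℕ, 2 * Real.pi * j * (y + 1) = 2 * Real.pi * j * y + j * (2 * Real.pi) := by
        intro j; ring
      simp only [h, e1, Real.cos_add_nat_mul_two_pi, Real.sin_add_nat_mul_two_pi]
  have hX : XDeg n T := by
    intro y
    refine ⟨fun j => ∑ k ∈ Finset.range (m+1), (a j k * Real.cos (2 * Real.pi * k * y)
        + b j k * Real.sin (2 * Real.pi * k * y)),
      fun j => ∑ k ∈ Finset.range (m+1), (c j k * Real.cos (2 * Real.pi * k * y)
        + d j k * Real.sin (2 * Real.pi * k * y)), fun x => ?_⟩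
    rw [h]
    refine Finset.sum_congr rfl fun j _ => ?_
    rw [Finset.sum_mul, Finset.sum_mul, ← Finset.sum_add_distrib]
    exact Finset.sum_congr rfl fun k _ => by ring
  have hY : XDeg m (fun y x => T x y) := by
    intro x
    refine ⟨fun k => ∑ j ∈ Finset.range (n+1), (a j k * Real.cos (2 * Real.pi * j * x)
        + c j k * Real.sin (2 * Real.pi * j * x)),
      fun k => ∑ j ∈ Finset.range (n+1), (b j k * Real.cos (2 * Real.pi * j * x)
        + d j k * Real.sin (2 * Real.pi * j * x)), fun y => ?_⟩
    simp only []
    rw [h, Finset.sum_comm]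
    refine Finset.sum_congr rfl fun j _ => ?_
    rw [Finset.sum_mul, Finset.sum_mul, ← Finset.sum_add_distrib]
    exact Finset.sum_congr rfl fun k _ => by ring
  unfold mixedModulus
  refine iSup_le fun s => iSup_le fun hs => iSup_le fun t => iSup_le fun ht => ?_
  have hcf : Continuous (Function.uncurry (fun y x => T x y)) := hcont.comp continuous_swap
  have b1 := diff_bound p hp m hm (fun y x => T x y) hcf ⟨fun x y => hper.2 y x, fun x y => hper.1 y x⟩
    hY t ht.1
  rw [lpNorm2_flip p T hcont] at b1
  have hgc : Continuous (Function.uncurry (fun x y => T x (y+t) - T x y)) := by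
    have h1 : Continuous (fun z : ℝ × ℝ => T z.1 (z.2 + t)) :=
      hcont.comp (f := fun z : ℝ × ℝ => (z.1, z.2 + t)) (by fun_prop)
    have h2 : Continuous (fun z : ℝ × ℝ => T z.1 z.2) := hcont
    exact h1.sub h2
  rw [lpNorm2_flip p (fun x y => T x (y+t) - T x y) hgc] at b1
  have b2 := diff_bound p hp n hn (fun x y => T x (y+t) - T x y) hgc
    ⟨fun x y => by simp only [hper.1], fun x y => by
      have : y + 1 + t = (y + t) + 1 := by ring
      simp only [this, hper.2]⟩ (by
      intro y
      obtain ⟨a1, b1, h1⟩ := hX (y+t)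
      obtain ⟨a2, b2, h2⟩ := hX y
      refine ⟨fun j => a1 j - a2 j, fun j => b1 j - b2 j, fun x => ?_⟩
      simp only [h1, h2]
      rw [← Finset.sum_sub_distrib]
      exact Finset.sum_congr rfl fun k _ => by ring) s hs.1
  have e : (fun x y => T (x + s) (y + t) - T (x + s) y - T x (y + t) + T x y) =
      fun x y => (T (x+s) (y+t) - T (x+s) y) - (T x (y+t) - T x y) := by
    ext x y; ring
  rw [e]
  refine b2.trans ?_
  have hs2 := hs.2
  have ht2 := ht.2
  refine mul_le_mul' (ENNReal.ofReal_le_ofReal (by gcongr)) (b1.trans ?_)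
  exact mul_le_mul' (ENNReal.ofReal_le_ofReal (by gcongr)) le_rfl

lemma int_bound (p : ℝ) (hp : 1 < p) (n : ℕ) (hn : 1 ≤ n) :
    ∫⁻ t in Set.Ioc (0:ℝ) 1, ENNReal.ofReal (t ^ (-(1/p)) / t) *
      ENNReal.ofReal (min 2 (2 * Real.pi * n * t)) ≤
    ENNReal.ofReal (2 * Real.pi * (p * (p / (p - 1))) * (n:ℝ) ^ (1/p)) := by
  have hpi := Real.pi_pos
  have hpi3 := Real.pi_gt_three
  have hp0 : 0 < p := by linarith
  have hp1 : 0 < p - 1 := by linarith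
  have hn0 : (1:ℝ) ≤ n := by exact_mod_cast hn
  have hnp : (0:ℝ) < n := by linarith
  have h1p : 1 / p < 1 := by rw [div_lt_one hp0]; exact hp
  have h0p : 0 < 1 / p := by positivity
  have hi : (0:ℝ) < 1 / n := by positivity
  have hi1 : 1 / (n:ℝ) ≤ 1 := by rw [div_le_one hnp]; exact hn0
  set F : ℝ → ℝ≥0∞ := fun t => ENNReal.ofReal (t ^ (-(1/p)) / t) *
      ENNReal.ofReal (min 2 (2 * Real.pi * n * t)) with hF
  rw [← Set.Ioc_union_Ioc_eq_Ioc hi.le hi1]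
  refine (lintegral_union_le _ _ _).trans ?_
  have A : ∫⁻ t in Set.Ioc (0:ℝ) (1/n), F t ≤ ENNReal.ofReal (2 * Real.pi * (p/(p-1)) * (n:ℝ)^(1/p)) := by
    have hint : IntervalIntegrable (fun t : ℝ => 2 * Real.pi * n * t ^ (-(1/p))) volume 0 (1/n) :=
      (intervalIntegral.intervalIntegrable_rpow' (by linarith)).const_mul _
    calc ∫⁻ t in Set.Ioc (0:ℝ) (1/n), F t ≤
          ∫⁻ t in Set.Ioc (0:ℝ) (1/n), ENNReal.ofReal (2 * Real.pi * n * t ^ (-(1/p))) := by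
          refine setLIntegral_mono' measurableSet_Ioc fun t ht => ?_
          have ht0 : 0 < t := ht.1
          simp only [hF]
          rw [← ENNReal.ofReal_mul (by positivity)]
          refine ENNReal.ofReal_le_ofReal ?_
          calc t ^ (-(1/p)) / t * min 2 (2 * Real.pi * n * t) ≤
              t ^ (-(1/p)) / t * (2 * Real.pi * n * t) := by
                gcongr; exact min_le_right _ _
            _ = _ := by field_simp
      _ = ENNReal.ofReal (∫ t in Set.Ioc (0:ℝ) (1/n), 2 * Real.pi * n * t ^ (-(1/p))) := by
          rw [ofReal_integral_eq_lintegral_ofReal]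
          · exact (intervalIntegrable_iff_integrableOn_Ioc_of_le hi.le).1 hint
          · refine (ae_restrict_iff' measurableSet_Ioc).2 (ae_of_all _ fun t ht => ?_)
            have ht0 : 0 < t := ht.1
            simp only [Pi.zero_apply]
            positivity
      _ = _ := by
          rw [← intervalIntegral.integral_of_le hi.le, intervalIntegral.integral_const_mul,
            integral_rpow (Or.inl (by linarith)), Real.zero_rpow (by linarith)]
          congr 1
          have : (1/(n:ℝ)) ^ (-(1/p) + 1) = (n:ℝ)^(1/p) / n := by
            rw [one_div, Real.inv_rpow hnp.le, ← Real.rpow_neg hnp.le, neg_add, neg_neg,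
              Real.rpow_add hnp, Real.rpow_neg_one]; rfl
          rw [this]
          have e2 : -(1/p) + 1 = (p-1)/p := by field_simp; ring
          rw [e2]
          field_simp
          ring
  have B : ∫⁻ t in Set.Ioc (1/(n:ℝ)) 1, F t ≤ ENNReal.ofReal (2 * p * (n:ℝ)^(1/p)) := by
    have hlt : -(1/p) - 1 < -1 := by linarith
    calc ∫⁻ t in Set.Ioc (1/(n:ℝ)) 1, F t ≤
          ∫⁻ t in Set.Ioc (1/(n:ℝ)) 1, ENNReal.ofReal (2 * t ^ (-(1/p) - 1)) := by
          refine setLIntegral_mono' measurableSet_Ioc fun t ht => ?_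
          have ht0 : 0 < t := hi.trans ht.1
          simp only [hF]
          rw [← ENNReal.ofReal_mul (by positivity), Real.rpow_sub_one ht0.ne', mul_comm (2:ℝ) (t ^ (-(1/p)) / t)]
          refine ENNReal.ofReal_le_ofReal ?_
          exact mul_le_mul_of_nonneg_left (min_le_left _ _) (by positivity)
      _ ≤ ∫⁻ t in Set.Ioi (1/(n:ℝ)), ENNReal.ofReal (2 * t ^ (-(1/p) - 1)) :=
          lintegral_mono_set Set.Ioc_subset_Ioi_self
      _ = ENNReal.ofReal (∫ t in Set.Ioi (1/(n:ℝ)), 2 * t ^ (-(1/p) - 1)) := by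
          rw [ofReal_integral_eq_lintegral_ofReal]
          · exact (integrableOn_Ioi_rpow_of_lt hlt hi).const_mul _
          · refine (ae_restrict_iff' measurableSet_Ioi).2 (ae_of_all _ fun t ht => ?_)
            have ht0 : 0 < t := hi.trans ht
            simp only [Pi.zero_apply]
            positivity
      _ = _ := by
          rw [integral_const_mul, integral_Ioi_rpow_of_lt hlt hi]
          congr 1
          have : (1/(n:ℝ)) ^ (-(1/p) - 1 + 1) = (n:ℝ)^(1/p) := by
            rw [one_div, Real.inv_rpow hnp.le, ← Real.rpow_neg hnp.le]; congr 1; ring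
          rw [this]
          have e2 : -(1/p) - 1 + 1 = -(1/p) := by ring
          rw [e2]
          field_simp
  refine (add_le_add A B).trans ?_
  rw [← ENNReal.ofReal_add (by positivity) (by positivity)]
  refine ENNReal.ofReal_le_ofReal ?_
  have e : p * (p/(p-1)) = p + p/(p-1) := by field_simp; ring
  rw [e]
  have hr : 0 ≤ (n:ℝ)^(1/p) := by positivity
  have : 2 * p * (n:ℝ)^(1/p) ≤ 2 * Real.pi * p * (n:ℝ)^(1/p) := by
    gcongr; linarith
  nlinarith

theorem statement14 (p : ℝ) (hp : 1 < p) (n m : ℕ) (hn : 1 ≤ n) (hm : 1 ≤ m)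
    (T : ℝ → ℝ → ℝ) (hT : IsTrigPoly2 n m T) :
    Kp p T ≤ ENNReal.ofReal
        (12 * Real.pi ^ 2 * p * (p / (p - 1)) * ((n : ℝ) * m) ^ (1 / p)) * lpNorm2 p T ∧
    Ip p T ≤ ENNReal.ofReal
        (8 * Real.pi ^ 2 * (p * (p / (p - 1))) ^ 2 * ((n : ℝ) * m) ^ (1 / p)) * lpNorm2 p T := by
  have hpi := Real.pi_pos
  have hpi3 := Real.pi_gt_three
  have hp0 : 0 < p := by linarith
  have hp1 : 0 < p - 1 := by linarith
  have hn0 : (1:ℝ) ≤ n := by exact_mod_cast hn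
  have hm0 : (1:ℝ) ≤ m := by exact_mod_cast hm
  have h0p : 0 < 1 / p := by positivity
  have hmul : ((n:ℝ) * m) ^ (1/p) = (n:ℝ)^(1/p) * (m:ℝ)^(1/p) :=
    Real.mul_rpow (by positivity) (by positivity)
  have hN : 1 ≤ (n:ℝ)^(1/p) := Real.one_le_rpow hn0 h0p.le
  have hM : 1 ≤ (m:ℝ)^(1/p) := Real.one_le_rpow hm0 h0p.le
  have In := int_bound p hp n hn
  have Im := int_bound p hp m hm
  have hmeas : ∀ k : ℕ, Measurable (fun t : ℝ => ENNReal.ofReal (t ^ (-(1/p)) / t) *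
      ENNReal.ofReal (min 2 (2 * Real.pi * k * t))) := by
    intro k; fun_prop
  rw [hmul]
  set A := (n:ℝ)^(1/p)
  set B := (m:ℝ)^(1/p)
  set q := p * (p/(p-1)) with hq
  have hq0 : 0 < q := by positivity
  set L := lpNorm2 p T
  constructor
  · have hb : ∀ t ∈ Set.Ioc (0:ℝ) 1, ENNReal.ofReal (t ^ (-(1/p)) / t) *
        (mixedModulus p T t 1 + mixedModulus p T 1 t) ≤
        (ENNReal.ofReal (t ^ (-(1/p)) / t) * ENNReal.ofReal (min 2 (2 * Real.pi * n * t)) +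
        ENNReal.ofReal (t ^ (-(1/p)) / t) * ENNReal.ofReal (min 2 (2 * Real.pi * m * t))) *
          (ENNReal.ofReal 2 * L) := by
      intro t ht
      have b1 := mixed_bound p hp n m hn hm T hT t 1 ht.1.le
      have b2 := mixed_bound p hp n m hn hm T hT 1 t zero_le_one
      have b1' : mixedModulus p T t 1 ≤ ENNReal.ofReal (min 2 (2 * Real.pi * n * t)) *
          (ENNReal.ofReal 2 * L) := b1.trans (by gcongr; exact min_le_left _ _)
      have b2' : mixedModulus p T 1 t ≤ ENNReal.ofReal 2 *
          (ENNReal.ofReal (min 2 (2 * Real.pi * m * t)) * L) :=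
        b2.trans (by gcongr; exact min_le_left _ _)
      calc _ ≤ ENNReal.ofReal (t ^ (-(1/p)) / t) * (ENNReal.ofReal (min 2 (2 * Real.pi * n * t)) *
          (ENNReal.ofReal 2 * L) + ENNReal.ofReal 2 *
          (ENNReal.ofReal (min 2 (2 * Real.pi * m * t)) * L)) := by gcongr
        _ = _ := by ring
    unfold Kp
    refine (setLIntegral_mono' measurableSet_Ioc hb).trans ?_
    have hadd : Measurable (fun t : ℝ => ENNReal.ofReal (t ^ (-(1/p)) / t) *
        ENNReal.ofReal (min 2 (2 * Real.pi * n * t)) + ENNReal.ofReal (t ^ (-(1/p)) / t) *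
        ENNReal.ofReal (min 2 (2 * Real.pi * m * t))) := (hmeas n).add (hmeas m)
    rw [lintegral_mul_const _ hadd, lintegral_add_left (hmeas n)]
    refine (mul_le_mul' (add_le_add In Im) le_rfl).trans ?_
    rw [← ENNReal.ofReal_add (by positivity) (by positivity), ← mul_assoc,
      ← ENNReal.ofReal_mul (by positivity)]
    refine mul_le_mul' (ENNReal.ofReal_le_ofReal ?_) le_rfl
    have e : 12 * Real.pi ^ 2 * p * (p/(p-1)) * (A*B) = (4 * Real.pi * q) * (3 * Real.pi * (A * B)) := by
      rw [hq]; ring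
    rw [e]
    have e2 : (2 * Real.pi * q * A + 2 * Real.pi * q * B) * 2 = (4 * Real.pi * q) * (A + B) := by ring
    rw [e2]
    gcongr
    have : A + B ≤ 2 * (A * B) := by nlinarith [mul_nonneg (sub_nonneg.2 hN) (sub_nonneg.2 hM)]
    have hAB : 0 < A * B := by positivity
    nlinarith
  · have hb : ∀ u ∈ Set.Ioc (0:ℝ) 1, (∫⁻ v in Set.Ioc (0:ℝ) 1,
        ENNReal.ofReal ((u * v) ^ (-(1/p)) / (u * v)) * mixedModulus p T u v) ≤
        (ENNReal.ofReal (u ^ (-(1/p)) / u) * ENNReal.ofReal (min 2 (2 * Real.pi * n * u))) *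
          (ENNReal.ofReal (2 * Real.pi * q * B) * L) := by
      intro u hu
      have hb2 : ∀ v ∈ Set.Ioc (0:ℝ) 1,
        ENNReal.ofReal ((u * v) ^ (-(1/p)) / (u * v)) * mixedModulus p T u v ≤
        (ENNReal.ofReal (v ^ (-(1/p)) / v) * ENNReal.ofReal (min 2 (2 * Real.pi * m * v))) *
         ((ENNReal.ofReal (u ^ (-(1/p)) / u) * ENNReal.ofReal (min 2 (2 * Real.pi * n * u))) * L) := by
        intro v hv
        have hu0 : 0 < u := hu.1
        have hv0 : 0 < v := hv.1
        have b1 := mixed_bound p hp n m hn hm T hT u v hu0.le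
        have e : (u * v) ^ (-(1/p)) / (u * v) = (u ^ (-(1/p)) / u) * (v ^ (-(1/p)) / v) := by
          rw [Real.mul_rpow hu0.le hv0.le]; field_simp
        rw [e, ENNReal.ofReal_mul (by positivity)]
        refine (mul_le_mul' le_rfl b1).trans (le_of_eq ?_)
        ring
      refine (setLIntegral_mono' measurableSet_Ioc hb2).trans ?_
      rw [lintegral_mul_const _ (hmeas m)]
      refine (mul_le_mul' Im le_rfl).trans (le_of_eq ?_)
      ring
    unfold Ip
    refine (setLIntegral_mono' measurableSet_Ioc hb).trans ?_
    rw [lintegral_mul_const _ (hmeas n)]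
    refine (mul_le_mul' In le_rfl).trans ?_
    rw [← mul_assoc, ← ENNReal.ofReal_mul (by positivity)]
    refine mul_le_mul' (ENNReal.ofReal_le_ofReal ?_) le_rfl
    have : 0 ≤ Real.pi ^ 2 * q^2 * (A * B) := by positivity
    nlinarith
end

section
/- There exist two functions f and g on ℝ², each 1-periodic in both variables, such that for every 1 ≤ p < ∞ both f and g belong to the mixed norm class V_p[V_p], but f + g does not belong to V_p[V_p] for any 1 ≤ p < ∞. In particular, V_p[V_p] is not a vector space. -/
open MeasureTheory Filter Set
open scoped ENNReal

open Classical in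
/-- indicator of the integers -/
noncomputable def intInd (t : ℝ) : ℝ := if ∃ n : ℤ, t = n then 1 else 0

open Classical in
/-- the shift -/
noncomputable def sh (t : ℝ) : ℝ := if Irrational t then 1 / 2 else 0

lemma intInd_neg (t : ℝ) : intInd (-t) = intInd t := by
  unfold intInd
  congr 1
  apply propext
  constructor
  · rintro ⟨n, h⟩; exact ⟨-n, by push_cast; linarith⟩
  · rintro ⟨n, h⟩; exact ⟨-n, by push_cast; linarith⟩

lemma intInd_add_one (t : ℝ) : intInd (t + 1) = intInd t := by
  unfold intInd
  congr 1
  apply propext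
  constructor
  · rintro ⟨n, h⟩; exact ⟨n - 1, by push_cast; linarith⟩
  · rintro ⟨n, h⟩; exact ⟨n + 1, by push_cast; linarith⟩

lemma intInd_sub_one (t : ℝ) : intInd (t - 1) = intInd t := by
  rw [← intInd_add_one (t - 1)]; congr 1; ring

lemma sh_add_one (t : ℝ) : sh (t + 1) = sh t := by
  unfold sh
  congr 1
  apply propext
  exact_mod_cast irrational_add_natCast_iff (n := 1) (x := t)

lemma vp_neg (p : ℝ) (u : ℝ → ℝ) : vp p (fun t => - u t) = vp p u := by
  unfold vp
  have : ∀ a b : ℝ, |-a - -b| = |a - b| := fun a b => by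
    rw [← abs_neg]; congr 1; ring
  simp only [this]

lemma vp_shift_le (p : ℝ) (u : ℝ → ℝ) (a : ℝ) : vp p (fun t => u (t - a)) ≤ vp p u := by
  unfold vp
  refine iSup_le fun n => iSup_le fun x => iSup_le fun h1 => iSup_le fun h2 => ?_
  exact le_iSup_of_le n <| le_iSup_of_le (fun i => x i - a) <|
    le_iSup_of_le (fun i hi => by have := h1 i hi; simp only; linarith) <|
    le_iSup_of_le (by simp only; linarith) le_rfl

lemma vp_shift (p : ℝ) (u : ℝ → ℝ) (a : ℝ) : vp p (fun t => u (t - a)) = vp p u := by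
  apply le_antisymm (vp_shift_le p u a)
  have := vp_shift_le p (fun t => u (t - a)) (-a)
  simpa using this

lemma vp_const (p : ℝ) (hp : 1 ≤ p) (c : ℝ) : vp p (fun _ => c) = 0 := by
  unfold vp
  have h1 : p ≠ 0 := by linarith
  simp [Real.zero_rpow h1, Real.zero_rpow (inv_ne_zero h1)]

lemma intInd_of_int (n : ℤ) : intInd n = 1 := by
  unfold intInd; exact if_pos ⟨n, rfl⟩

lemma intInd_bound (p : ℝ) (hp : 1 ≤ p) (a b : ℝ) (hab : a < b) :
    |intInd b - intInd a| ^ p ≤ ((⌊b⌋ : ℝ) + ⌈b⌉) - (⌊a⌋ + ⌈a⌉) := by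
  have h0 : p ≠ 0 := by linarith
  have hf : (⌊a⌋ : ℝ) ≤ ⌊b⌋ := by exact_mod_cast Int.floor_mono hab.le
  have hc : (⌈a⌉ : ℝ) ≤ ⌈b⌉ := by exact_mod_cast Int.ceil_mono hab.le
  by_cases hb : ∃ n : ℤ, b = n
  · obtain ⟨n, rfl⟩ := hb
    have : (⌊a⌋ : ℝ) + 1 ≤ n := by
      exact_mod_cast Int.floor_lt.2 hab
    have hle : |intInd n - intInd a| ^ p ≤ 1 := by
      apply Real.rpow_le_one (abs_nonneg _) _ (by linarith)
      rw [intInd_of_int]; unfold intInd; split_ifs <;> norm_num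
    simp only [Int.floor_intCast, Int.ceil_intCast] at *
    linarith
  · have hb0 : intInd b = 0 := if_neg hb
    rw [hb0]
    by_cases ha : ∃ n : ℤ, a = n
    · obtain ⟨n, rfl⟩ := ha
      have : (n : ℝ) + 1 ≤ ⌈b⌉ := by
        exact_mod_cast Int.lt_ceil.2 hab
      rw [intInd_of_int]
      simp only [Int.floor_intCast, Int.ceil_intCast] at *
      norm_num
      linarith
    · have ha0 : intInd a = 0 := if_neg ha
      rw [ha0]
      simp only [sub_zero, abs_zero, Real.zero_rpow h0]
      linarith

lemma vp_intInd (p : ℝ) (hp : 1 ≤ p) : vp p intInd < ⊤ := by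
  refine lt_of_le_of_lt (b := ENNReal.ofReal ((2 : ℝ) ^ (1 / p))) ?_ ENNReal.ofReal_lt_top
  unfold vp
  refine iSup_le fun n => iSup_le fun x => iSup_le fun h1 => iSup_le fun h2 => ?_
  apply ENNReal.ofReal_le_ofReal
  apply Real.rpow_le_rpow (Finset.sum_nonneg fun _ _ => Real.rpow_nonneg (abs_nonneg _) _) _
    (by positivity)
  calc _ ≤ ∑ k ∈ Finset.range n, (((⌊x (k+1)⌋ : ℝ) + ⌈x (k+1)⌉) - (⌊x k⌋ + ⌈x k⌉)) :=
        Finset.sum_le_sum fun k hk => intInd_bound p hp _ _ (h1 k (Finset.mem_range.1 hk))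
    _ = ((⌊x n⌋ : ℝ) + ⌈x n⌉) - (⌊x 0⌋ + ⌈x 0⌉) :=
        Finset.sum_range_sub (fun k => ((⌊x k⌋ : ℝ) + ⌈x k⌉)) n
    _ ≤ 2 := by
        rw [h2, Int.floor_add_one, Int.ceil_add_one]; push_cast; linarith

lemma intInd_half : intInd (1 / 2) = 0 := by
  unfold intInd
  apply if_neg
  rintro ⟨n, h⟩
  have : (1 : ℝ) = ((2 * n : ℤ) : ℝ) := by push_cast; linarith
  have : (1 : ℤ) = 2 * n := by exact_mod_cast this
  omega

lemma intInd_zero : intInd 0 = 1 := by simpa using intInd_of_int 0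

lemma intInd_one : intInd 1 = 1 := by simpa using intInd_of_int 1

lemma vp_diff (p : ℝ) (hp : 1 ≤ p) (x : ℝ) :
    1 ≤ vp p (fun y => intInd (y - x) + -intInd (y - x - 1 / 2)) := by
  rw [vp_shift p (fun y => intInd y + -intInd (y - 1 / 2)) x]
  unfold vp
  refine le_iSup_of_le 2 <| le_iSup_of_le (fun i => (i : ℝ) / 2) <|
    le_iSup_of_le (fun i hi => by push_cast; linarith) <|
    le_iSup_of_le (by norm_num) ?_
  rw [← ENNReal.ofReal_one]
  apply ENNReal.ofReal_le_ofReal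
  apply Real.one_le_rpow _ (by positivity)
  have e1 : intInd (1 - 1 / 2) = 0 := by rw [← intInd_half]; norm_num
  have e0 : intInd (0 - 1 / 2) = 0 := by
    rw [show (0:ℝ) - 1 / 2 = -(1 / 2) by norm_num, intInd_neg, intInd_half]
  have e2 : intInd (1/2 - 1 / 2) = 1 := by rw [← intInd_zero]; norm_num
  have h2 : (1 : ℝ) ≤ 2 ^ p := Real.one_le_rpow (by norm_num) (by linarith)
  have a1 : |((0:ℝ) + -1) - (1 + -0)| = 2 := by norm_num
  have a2 : |((1:ℝ) + -0) - (0 + -1)| = 2 := by norm_num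
  rw [Finset.sum_range_succ, Finset.sum_range_one]
  have c0 : ((0 : ℕ) : ℝ) / 2 = 0 := by norm_num
  have c1 : ((0 + 1 : ℕ) : ℝ) / 2 = 1 / 2 := by norm_num
  have c1' : ((1 : ℕ) : ℝ) / 2 = 1 / 2 := by norm_num
  have c2 : ((1 + 1 : ℕ) : ℝ) / 2 = 1 := by norm_num
  simp only [c0, c1, c1', c2, e0, e1, e2, intInd_half, intInd_zero, intInd_one, a1, a2]
  linarith

/-- odd bump -/
noncomputable def bump (k : ℕ) : ℝ := if Even k then 0 else √2 - 1

lemma vp_alt (p : ℝ) (hp : 1 ≤ p) (D : ℝ → ℝ) (h0 : ∀ x, ¬ Irrational x → D x = 0)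
    (h1 : ∀ x, Irrational x → 1 ≤ D x) : vp p D = ⊤ := by
  have hp0 : 0 < p := by linarith
  have key : ∀ N : ℕ, 0 < N → ENNReal.ofReal (((2 * N : ℕ) : ℝ) ^ (1 / p)) ≤ vp p D := by
    intro N hN
    have hN' : (0 : ℝ) < 2 * N := by positivity
    have s1 : 1 < √2 := by rw [Real.lt_sqrt] <;> norm_num
    have s2 : √2 < 2 := by rw [Real.sqrt_lt'] <;> norm_num
    unfold vp
    refine le_iSup_of_le (2 * N) <| le_iSup_of_le (fun i => ((i : ℝ) + bump i) / (2 * N)) <|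
      le_iSup_of_le (fun i hi => ?_) <|
      le_iSup_of_le ?_ ?_
    · apply div_lt_div_of_pos_right _ hN'
      push_cast
      unfold bump
      split_ifs <;> linarith
    · simp [bump]; omega
    · apply ENNReal.ofReal_le_ofReal
      apply Real.rpow_le_rpow (by positivity) _ (by positivity)
      calc ((2 * N : ℕ) : ℝ) = ∑ k ∈ Finset.range (2 * N), (1 : ℝ) := by simp
        _ ≤ _ := by
          apply Finset.sum_le_sum
          intro k _
          apply Real.one_le_rpow _ hp0.le
          have ev : ∀ k : ℕ, Even k → D (((k : ℝ) + bump k) / (2 * N)) = 0 := by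
            intro k hk
            apply h0
            have : ((k : ℝ) + bump k) / (2 * N) = (((k : ℚ) / (2 * N) : ℚ) : ℝ) := by
              simp [bump, hk]
            rw [this]
            exact Rat.not_irrational _
          have od : ∀ k : ℕ, ¬ Even k → 1 ≤ D (((k : ℝ) + bump k) / (2 * N)) := by
            intro k hk
            apply h1
            have : ((k : ℝ) + bump k) / (2 * N) =
                (((k : ℚ) - 1 : ℚ) + √2) / ((2 * N : ℕ) : ℝ) := by
              simp [bump, hk]; ring
            rw [this]
            exact (irrational_sqrt_two.ratCast_add _).div_natCast (by omega)
          by_cases hk : Even k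
          · have hk' : ¬ Even (k + 1) := by simpa [Nat.even_add_one] using hk
            rw [ev k hk, sub_zero]
            exact (od _ hk').trans (le_abs_self _)
          · have hk' : Even (k + 1) := by simpa [Nat.even_add_one] using hk
            rw [ev _ hk', zero_sub, abs_neg]
            exact (od _ hk).trans (le_abs_self _)
  by_contra hne
  set M := (vp p D).toReal with hM
  have hM0 : 0 ≤ M := ENNReal.toReal_nonneg
  obtain ⟨N, hN⟩ := exists_nat_gt (M ^ p)
  have hNpos : 0 < N := by
    have : (0 : ℝ) < N := lt_of_le_of_lt (Real.rpow_nonneg hM0 _) hN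
    exact_mod_cast this
  have h := key N hNpos
  rw [ENNReal.ofReal_le_iff_le_toReal hne, ← hM] at h
  have h' := Real.rpow_le_rpow (by positivity) h hp0.le
  rw [← Real.rpow_mul (by positivity), one_div, inv_mul_cancel₀ hp0.ne', Real.rpow_one] at h'
  push_cast at h'
  have : (0 : ℝ) < N := by exact_mod_cast hNpos
  linarith

lemma sh_swap (x y : ℝ) : intInd (y - x - sh x) = intInd (x - (y - sh y)) := by
  have irr : ∀ t : ℝ, Irrational t → intInd t = 0 := by
    intro t ht
    unfold intInd
    apply if_neg
    rintro ⟨n, h⟩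
    exact ht ⟨n, by simp [h]⟩
  by_cases hx : Irrational x <;> by_cases hy : Irrational y
  · simp only [sh, hx, hy, if_true]
    rw [← intInd_neg (y - x - 1/2), ← intInd_sub_one (x - _)]
    rw [← intInd_sub_one (-(y - x - 1 / 2))]
    congr 1; ring
  · rw [Irrational, not_not] at hy
    obtain ⟨q, rfl⟩ := hy
    rw [irr _ (by simpa [sh, hx, sub_sub] using (hx.ratCast_sub q).sub_ratCast (1/2)), irr]
    simpa [sh, Rat.not_irrational] using hx
  · rw [Irrational, not_not] at hx
    obtain ⟨q, rfl⟩ := hx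
    rw [irr _ (by simpa [sh, Rat.not_irrational] using hy), irr]
    simpa [sh, hy] using (hy.sub_ratCast (1/2)).ratCast_sub q
  · simp only [sh, hx, hy, if_false]
    rw [← intInd_neg]; congr 1; ring

/-- There exist biperiodic `f` and `g` such that for every `1 ≤ p < ∞`
both `f, g ∈ V_p[V_p]` but `f + g ∉ V_p[V_p]`; thus `V_p[V_p]` is not a vector space. -/
theorem statement15 :
    ∃ f g : ℝ → ℝ → ℝ, BiPeriodic f ∧ BiPeriodic g ∧
      ∀ p : ℝ, 1 ≤ p →
        MemVpVp p f ∧ MemVpVp p g ∧ ¬ MemVpVp p (fun x y => f x y + g x y) := by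
  refine ⟨fun x y => intInd (y - x), fun x y => -intInd (y - x - sh x), ⟨?_, ?_⟩, ⟨?_, ?_⟩, ?_⟩
  · intro x y
    simp only
    rw [← intInd_sub_one (y - x)]; congr 1; ring
  · intro x y
    simp only
    rw [← intInd_add_one (y - x)]; congr 1; ring
  · intro x y
    simp only
    rw [sh_add_one, ← intInd_sub_one (y - x - sh x)]; congr 2; ring
  · intro x y
    simp only
    rw [← intInd_add_one (y - x - sh x)]; congr 2; ring
  intro p hp
  have F1 : ∀ x, vp p (fun y => intInd (y - x)) = vp p intInd := fun x => vp_shift p intInd x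
  have F2 : ∀ y, vp p (fun x => intInd (y - x)) = vp p intInd := fun y => by
    rw [← vp_shift p intInd y]
    congr 1; funext x; rw [← intInd_neg]; congr 1; ring
  have G1 : ∀ x, vp p (fun y => -intInd (y - x - sh x)) = vp p intInd := fun x => by
    rw [vp_neg, ← vp_shift p intInd (x + sh x)]
    congr 1; funext y; congr 1; ring
  have G2 : ∀ y, vp p (fun x => -intInd (y - x - sh x)) = vp p intInd := fun y => by
    rw [vp_neg, ← vp_shift p intInd (y - sh y)]
    congr 1; funext x; exact sh_swap x y
  have hfin := vp_intInd p hp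
  refine ⟨?_, ?_, ?_⟩
  · simp only [MemVpVp, F1, F2, vp_const p hp]
    simp [hfin]
  · simp only [MemVpVp, G1, G2, vp_const p hp]
    simp [hfin]
  · rintro ⟨h1, -, h3, -⟩
    refine absurd (vp_alt p hp _ ?_ ?_) h3.ne
    · intro x hx
      simp only [sh, hx, if_false, sub_zero, add_neg_cancel, vp_const p hp]
      rfl
    · intro x hx
      have h := h1 x
      simp only [sh, hx, if_true] at h ⊢
      have := ENNReal.toReal_mono h.ne (vp_diff p hp x)
      simpa using this
end
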